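/- arXiv:2605.27212 — 3 statements merged into one kernel-verified Lean document; each statement's English description precedes it below -/
import Mathlib

section
/- Let P be a coordinate-replacement kernel on X = S^N with fibre kernels K_i(x_{−i}), and let G ⊆ X. Suppose there is γ > 0 such that, for every coordinate i and every configuration x_{−i} whose i-fibre {x^{i,u} : u ∈ S} intersects G, the fibre kernel K_i(x_{−i}) has spectral gap at least γ with respect to the uniform measure on S (i.e. Var(φ) ≤ (1/γ)·E_{K_i(x_{−i})}(φ,φ) for all φ: S → ℝ). Then there is a universal constant C < ∞ such that every nonnegative F: X → ℝ with support contained in G satisfies Ent_μ(F²) ≤ C · (N · log|S| / γ) · E_P^μ(F,F). -/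
open Finset

noncomputable section

/-- `Ent_ρ(g) = ρ(g log g) − ρ(g) log ρ(g)`. -/
def ent {E : Type*} [Fintype E] (ρ g : E → ℝ) : ℝ :=
  (∑ x, ρ x * g x * Real.log (g x)) - (∑ x, ρ x * g x) * Real.log (∑ x, ρ x * g x)

/-- Variance of `f` under the weight `ρ`. -/
def var {E : Type*} [Fintype E] (ρ f : E → ℝ) : ℝ :=
  (∑ x, ρ x * (f x) ^ 2) - (∑ x, ρ x * f x) ^ 2

/-- Dirichlet form `E_K^ρ(f,f) = (1/2) Σ_{x,y} ρ(x) K(x,y) (f(x)−f(y))²`. -/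
def dirichlet {E : Type*} [Fintype E] (ρ : E → ℝ) (K : E → E → ℝ) (f : E → ℝ) : ℝ :=
  (1 / 2) * ∑ x, ∑ y, ρ x * K x y * (f x - f y) ^ 2

/-- The uniform weight on a finite type. -/
def unif (E : Type*) [Fintype E] : E → ℝ := fun _ => (Fintype.card E : ℝ)⁻¹

/-!
Entropy tensorizes over product weights. On each fibre, Gibbs' inequality and the elementary bound
`klFun (s ^ 2) ≤ 8 * log t * (s - 1) ^ 2` for `0 ≤ s ≤ t` and `2 ≤ t`, applied to `s = φ / ρ(φ)` and
`t = p⁻¹` where `p` bounds the weights from below, control the entropy of `φ ^ 2` by `8 * log p⁻¹`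
times the variance of `φ`. On a fibre meeting `G` the Poincaré inequality turns the variance into a
Dirichlet form, while on the other fibres `F` vanishes; by invariance of the product weight under
resampling a coordinate, the fibrewise Dirichlet forms average to that of the coordinate-replacement
kernel.
-/

open Function InformationTheory Real

theorem mul_klFun_div (a : ℝ) {t : ℝ} (ht : t ≠ 0) :
    t * klFun (a / t) = a * (log a - log t) + t - a := by
  rcases eq_or_ne a 0 with rfl | ha
  · simp [klFun]
  · rw [klFun_apply, log_div ha ht]
    field_simp

theorem sub_le_mul_log_sub_log {a b : ℝ} (ha : 0 ≤ a) (hb : 0 ≤ b) (hab : b = 0 → a = 0) :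
    a - b ≤ a * (log a - log b) := by
  rcases hb.eq_or_lt with rfl | hb
  · simp [hab rfl]
  · have hkl := mul_nonneg hb.le (klFun_nonneg (div_nonneg ha hb.le))
    rw [mul_klFun_div a hb.ne'] at hkl
    linarith

theorem klFun_sq_le {s t : ℝ} (hs : 0 ≤ s) (ht : 2 ≤ t) (hst : s ≤ t) :
    klFun (s ^ 2) ≤ 8 * log t * (s - 1) ^ 2 := by
  have ht' : 5 / 8 ≤ log t := by linarith [log_two_gt_d9, log_le_log two_pos ht]
  have hkl : klFun (s ^ 2) = 2 * (s ^ 2 * log s) + 1 - s ^ 2 := by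
    rw [klFun_apply, log_pow]; push_cast; ring
  rw [hkl]
  rcases hs.eq_or_lt with rfl | hs
  · norm_num; linarith
  rcases le_total s 2 with hs2 | hs2
  · have hlog : s ^ 2 * log s ≤ s ^ 2 * (s - 1) := by
      gcongr; exact log_le_sub_one_of_pos hs
    have hcoef : (2 * s + 1) * (s - 1) ^ 2 ≤ 8 * log t * (s - 1) ^ 2 := by
      gcongr; linarith
    linarith
  · have hlog : s ^ 2 * log s ≤ s ^ 2 * log t := by gcongr
    have hsq : log t * s ^ 2 ≤ log t * (4 * (s - 1) ^ 2) := by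
      gcongr; nlinarith
    nlinarith

section Weight

theorem sum_unif (E : Type*) [Fintype E] [Nonempty E] : ∑ x, unif E x = 1 := by
  simp [unif]

variable {E : Type*} [Fintype E] {ρ : E → ℝ}

theorem nonempty_of_sum_eq_one (hρ : ∑ x, ρ x = 1) : Nonempty E :=
  univ_nonempty_iff.1 (nonempty_of_sum_ne_zero (hρ ▸ one_ne_zero))

theorem ent_eq_zero_of_forall_eq (hρ : ∑ x, ρ x = 1) {g : E → ℝ} (hg : ∀ x y, g x = g y) :
    ent ρ g = 0 := by
  obtain ⟨a⟩ := nonempty_of_sum_eq_one hρ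
  simp [ent, fun x ↦ hg x a, ← sum_mul, hρ]

/-- Gibbs' variational principle, with equality at `h = g`. -/
theorem sum_mul_log_sub_le_ent (hρ : ∀ x, 0 ≤ ρ x) {g h : E → ℝ} (hg : ∀ x, 0 ≤ g x)
    (hh : ∀ x, 0 ≤ h x) (hgh : ∀ x, h x = 0 → g x = 0) :
    ∑ x, ρ x * g x * log (h x) - (∑ x, ρ x * g x) * log (∑ x, ρ x * h x) ≤ ent ρ g := by
  set M := ∑ x, ρ x * g x with hM
  set H := ∑ x, ρ x * h x with hH
  have hρg : ∀ x, 0 ≤ ρ x * g x := fun x ↦ mul_nonneg (hρ x) (hg x)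
  have hρh : ∀ x, 0 ≤ ρ x * h x := fun x ↦ mul_nonneg (hρ x) (hh x)
  have hM_eq_zero : M = 0 → ∀ x, ρ x * g x = 0 := fun h0 x ↦
    (sum_eq_zero_iff_of_nonneg fun x _ ↦ hρg x).1 h0 x (mem_univ x)
  have hH_eq_zero : H = 0 → ∀ x, ρ x * g x = 0 := fun h0 x ↦ by
    have := (sum_eq_zero_iff_of_nonneg fun x _ ↦ hρh x).1 h0 x (mem_univ x)
    rcases mul_eq_zero.1 this with h0 | h0 <;> simp [h0, hgh x]
  by_cases hzero : ∀ x, ρ x * g x = 0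
  · simp [ent, hM, hzero]
  have hMpos : 0 < M := (sum_nonneg fun x _ ↦ hρg x).lt_of_ne' (mt hM_eq_zero hzero)
  have hHpos : 0 < H := (sum_nonneg fun x _ ↦ hρh x).lt_of_ne' (mt hH_eq_zero hzero)
  have hpoint : ∀ x, ρ x * g x - M / H * (ρ x * h x) ≤
      ρ x * g x * log (g x) - ρ x * g x * log (h x) - ρ x * g x * (log M - log H) := by
    intro x
    rcases (hh x).eq_or_lt with h0 | hpos
    · simp [← h0, hgh x h0.symm]
    · have hgibbs := sub_le_mul_log_sub_log (b := M / H * h x) (hg x) (by positivity)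
        (fun h0 ↦ absurd h0 (by positivity))
      rw [log_mul (by positivity) hpos.ne', log_div hMpos.ne' hHpos.ne'] at hgibbs
      linarith [mul_le_mul_of_nonneg_left hgibbs (hρ x)]
  have hsum := sum_le_sum fun x (_ : x ∈ univ) ↦ hpoint x
  simp only [sum_sub_distrib, ← mul_sum, ← sum_mul, ← hM, ← hH, div_mul_cancel₀ M hHpos.ne']
    at hsum
  rw [ent, ← hM]
  linarith

theorem ent_sum_mul_le {T : Type*} [Fintype T] {σ : T → ℝ} (hρ : ∀ x, 0 ≤ ρ x)
    (hσ : ∀ t, 0 ≤ σ t) {g : T → E → ℝ} (hg : ∀ t x, 0 ≤ g t x) :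
    ent ρ (fun x ↦ ∑ t, σ t * g t x) ≤ ∑ t, σ t * ent ρ (g t) := by
  set m : E → ℝ := fun x ↦ ∑ t, σ t * g t x with hm
  have hσg : ∀ t x, 0 ≤ σ t * g t x := fun t x ↦ mul_nonneg (hσ t) (hg t x)
  have hm0 : ∀ x, 0 ≤ m x := fun x ↦ sum_nonneg fun t _ ↦ hσg t x
  have hgibbs : ∀ t, σ t * (∑ x, ρ x * g t x * log (m x) -
      (∑ x, ρ x * g t x) * log (∑ x, ρ x * m x)) ≤ σ t * ent ρ (g t) := by
    intro t
    rcases (hσ t).eq_or_lt with h0 | hpos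
    · simp [← h0]
    · refine mul_le_mul_of_nonneg_left (sum_mul_log_sub_le_ent hρ (hg t) hm0 fun x hx ↦ ?_) hpos.le
      have := (sum_eq_zero_iff_of_nonneg fun t _ ↦ hσg t x).1 hx t (mem_univ t)
      exact (mul_eq_zero.1 this).resolve_left hpos.ne'
  have hswap : ∀ w : E → ℝ, ∑ t, σ t * ∑ x, ρ x * g t x * w x = ∑ x, ρ x * m x * w x := by
    intro w
    simp only [hm, mul_sum, sum_mul]
    rw [sum_comm]
    exact sum_congr rfl fun x _ ↦ sum_congr rfl fun t _ ↦ by ring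
  calc ent ρ m
      = ∑ t, σ t * (∑ x, ρ x * g t x * log (m x) -
          (∑ x, ρ x * g t x) * log (∑ x, ρ x * m x)) := by
        have hmass := hswap fun _ ↦ 1
        simp only [mul_one] at hmass
        simp only [mul_sub, sum_sub_distrib, hswap, ← mul_assoc, ← sum_mul, hmass, ent]
    _ ≤ ∑ t, σ t * ent ρ (g t) := sum_le_sum fun t _ ↦ hgibbs t

theorem ent_le_mul_sum_klFun_div (hρ : ∑ x, ρ x = 1) {g : E → ℝ} (hg : 0 ≤ ∑ x, ρ x * g x)
    {t : ℝ} (ht : 0 < t) : ent ρ g ≤ t * ∑ x, ρ x * klFun (g x / t) := by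
  have hterm : ∀ x, t * (ρ x * klFun (g x / t)) =
      ρ x * g x * log (g x) - ρ x * g x * log t + ρ x * t - ρ x * g x := fun x ↦ by
    rw [mul_left_comm, mul_klFun_div _ ht.ne']; ring
  have hgibbs := sub_le_mul_log_sub_log hg ht.le fun h0 ↦ absurd h0 ht.ne'
  simp only [mul_sum, hterm, sum_sub_distrib, sum_add_distrib, ← sum_mul, hρ, ent]
  linarith

theorem var_eq_sum_mul_sub_sq (hρ : ∑ x, ρ x = 1) (f : E → ℝ) :
    var ρ f = ∑ x, ρ x * (f x - ∑ y, ρ y * f y) ^ 2 := by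
  set m := ∑ y, ρ y * f y with hm
  have hterm : ∀ x, ρ x * (f x - m) ^ 2 = ρ x * f x ^ 2 - 2 * m * (ρ x * f x) + ρ x * m ^ 2 :=
    fun x ↦ by ring
  simp only [hterm, sum_add_distrib, sum_sub_distrib, ← mul_sum, ← sum_mul, hρ, ← hm, var]
  ring

theorem var_eq_zero_of_forall_eq (hρ : ∑ x, ρ x = 1) {f : E → ℝ} (hf : ∀ x y, f x = f y) :
    var ρ f = 0 := by
  obtain ⟨a⟩ := nonempty_of_sum_eq_one hρ
  simp [var, fun x ↦ hf x a, ← sum_mul, hρ]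

theorem var_abs_le (hρ : ∀ x, 0 ≤ ρ x) (f : E → ℝ) : var ρ (fun x ↦ |f x|) ≤ var ρ f := by
  have hmean : |∑ x, ρ x * f x| ≤ ∑ x, ρ x * |f x| :=
    (abs_sum_le_sum_abs _ _).trans_eq <| sum_congr rfl fun x _ ↦ by
      rw [abs_mul, abs_of_nonneg (hρ x)]
  simp only [var, sq_abs]
  gcongr ?_ - ?_
  exact sq_le_sq.2 (hmean.trans (le_abs_self _))

variable {p : ℝ}

theorem div_sum_mul_le_inv (hp : 0 < p) (hpρ : ∀ x, p ≤ ρ x) {f : E → ℝ} (hf : ∀ x, 0 ≤ f x)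
    (x : E) : f x / ∑ y, ρ y * f y ≤ p⁻¹ := by
  have hρf : ∀ y, 0 ≤ ρ y * f y := fun y ↦ mul_nonneg (hp.le.trans (hpρ y)) (hf y)
  refine div_le_of_le_mul₀ (sum_nonneg fun y _ ↦ hρf y) (inv_nonneg.2 hp.le) ?_
  rw [inv_mul_eq_div, le_div_iff₀' hp]
  exact (mul_le_mul_of_nonneg_right (hpρ x) (hf x)).trans
    (single_le_sum (fun y _ ↦ hρf y) (mem_univ x))

theorem ent_sq_le_log_mul_var_of_nonneg (hp : 0 < p) (hp2 : p ≤ 1 / 2) (hpρ : ∀ x, p ≤ ρ x)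
    (hρ : ∑ x, ρ x = 1) {f : E → ℝ} (hf : ∀ x, 0 ≤ f x) :
    ent ρ (fun x ↦ f x ^ 2) ≤ 8 * log p⁻¹ * var ρ f := by
  have hρpos : ∀ x, 0 < ρ x := fun x ↦ hp.trans_le (hpρ x)
  have hρf : ∀ x, 0 ≤ ρ x * f x := fun x ↦ mul_nonneg (hρpos x).le (hf x)
  set m := ∑ x, ρ x * f x with hm
  rcases (sum_nonneg fun x _ ↦ hρf x : 0 ≤ m).eq_or_lt with hm0 | hmpos
  · have hf0 : f = 0 := funext fun x ↦ by
      have := (sum_eq_zero_iff_of_nonneg fun x _ ↦ hρf x).1 hm0.symm x (mem_univ x)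
      exact (mul_eq_zero.1 this).resolve_left (hρpos x).ne'
    simp [hf0, ent, var]
  calc ent ρ (fun x ↦ f x ^ 2)
      ≤ m ^ 2 * ∑ x, ρ x * klFun (f x ^ 2 / m ^ 2) :=
        ent_le_mul_sum_klFun_div hρ
          (sum_nonneg fun x _ ↦ mul_nonneg (hρpos x).le (sq_nonneg _)) (by positivity)
    _ ≤ m ^ 2 * ∑ x, ρ x * (8 * log p⁻¹ * (f x / m - 1) ^ 2) := by
        gcongr with x
        · exact (hρpos x).le
        · rw [← div_pow]
          exact klFun_sq_le (div_nonneg (hf x) hmpos.le)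
            ((le_inv_comm₀ two_pos hp).2 (by simpa using hp2)) (div_sum_mul_le_inv hp hpρ hf x)
    _ = 8 * log p⁻¹ * var ρ f := by
        rw [var_eq_sum_mul_sub_sq hρ, mul_sum, mul_sum]
        refine sum_congr rfl fun x _ ↦ ?_
        have hscale : f x - m = m * (f x / m - 1) := by
          rw [mul_sub_one, mul_div_cancel₀ _ hmpos.ne']
        rw [← hm, hscale]
        ring

theorem ent_sq_le_log_mul_var (hp : 0 < p) (hpρ : ∀ x, p ≤ ρ x) (hρ : ∑ x, ρ x = 1) (f : E → ℝ) :
    ent ρ (fun x ↦ f x ^ 2) ≤ 8 * log p⁻¹ * var ρ f := by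
  have hρ0 : ∀ x, 0 ≤ ρ x := fun x ↦ hp.le.trans (hpρ x)
  rcases subsingleton_or_nontrivial E with hE | hE
  · have hf : ∀ x y, f x = f y := fun x y ↦ congrArg f (Subsingleton.elim x y)
    rw [var_eq_zero_of_forall_eq hρ hf, mul_zero,
      ent_eq_zero_of_forall_eq hρ fun x y ↦ congrArg (· ^ 2) (hf x y)]
  · obtain ⟨a, b, hab⟩ := exists_pair_ne E
    have hp2 : p ≤ 1 / 2 := by
      classical
      have hpair : ρ a + ρ b ≤ 1 := by
        rw [← sum_pair hab, ← hρ]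
        exact sum_le_sum_of_subset_of_nonneg (subset_univ _) fun x _ _ ↦ hρ0 x
      linarith [hpρ a, hpρ b]
    have hlog : 0 ≤ log p⁻¹ := log_nonneg ((one_le_inv₀ hp).2 (by linarith))
    have habs := ent_sq_le_log_mul_var_of_nonneg hp hp2 hpρ hρ fun x ↦ abs_nonneg (f x)
    simp only [sq_abs] at habs
    exact habs.trans (by gcongr; exact var_abs_le hρ0 f)

theorem ent_sq_le_log_mul_dirichlet_of_poincare (hp : 0 < p) (hpρ : ∀ x, p ≤ ρ x)
    (hρ : ∑ x, ρ x = 1) {c : ℝ} {Q : E → E → ℝ} {f : E → ℝ}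
    (hf : f ≠ 0 → var ρ f ≤ c * dirichlet ρ Q f) :
    ent ρ (fun x ↦ f x ^ 2) ≤ 8 * (c * log p⁻¹) * dirichlet ρ Q f := by
  rcases eq_or_ne f 0 with rfl | hne
  · simp [ent, dirichlet]
  · obtain ⟨x, -⟩ := ne_iff.1 hne
    have hp1 : p ≤ 1 := (hpρ x).trans <| hρ ▸
      single_le_sum (fun y _ ↦ hp.le.trans (hpρ y)) (mem_univ x)
    calc ent ρ (fun x ↦ f x ^ 2)
        ≤ 8 * log p⁻¹ * var ρ f := ent_sq_le_log_mul_var hp hpρ hρ f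
      _ ≤ 8 * log p⁻¹ * (c * dirichlet ρ Q f) := by
          have hlog : 0 ≤ log p⁻¹ := log_nonneg ((one_le_inv₀ hp).2 hp1)
          gcongr
          exact hf hne
      _ = 8 * (c * log p⁻¹) * dirichlet ρ Q f := by ring

end Weight

section FibreMean

variable {ι : Type*} [DecidableEq ι] {S : ι → Type*} [∀ i, Fintype (S i)]

/-- The average of `g` over coordinate `i`, that is, its conditional expectation given the other
coordinates, regarded as a function of the whole configuration. -/
def fibreMean (ρ : ∀ i, S i → ℝ) (i : ι) (g : (∀ i, S i) → ℝ) (x : ∀ i, S i) : ℝ :=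
  ∑ u, ρ i u * g (update x i u)

theorem dependsOn_fibreMean (ρ : ∀ i, S i → ℝ) {i : ι} {s : Set ι} {g : (∀ i, S i) → ℝ}
    (hg : DependsOn g (insert i s)) : DependsOn (fibreMean ρ i g) s := by
  intro x y hxy
  refine sum_congr rfl fun u _ ↦ congrArg (ρ i u * ·) (hg fun j hj ↦ ?_)
  rcases eq_or_ne j i with rfl | hji
  · simp
  · simpa [hji] using hxy j (hj.resolve_left hji)

theorem ent_fibreMean_update_le {ρ : ∀ i, S i → ℝ} (hρ0 : ∀ i u, 0 ≤ ρ i u) {g : (∀ i, S i) → ℝ}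
    (hg : ∀ x, 0 ≤ g x) {i j : ι} (hij : i ≠ j) (x : ∀ i, S i) :
    ent (ρ j) (fun v ↦ fibreMean ρ i g (update x j v)) ≤
      fibreMean ρ i (fun y ↦ ent (ρ j) fun v ↦ g (update y j v)) x := by
  simp only [fibreMean, update_comm hij.symm]
  exact ent_sum_mul_le (hρ0 j) (hρ0 i) fun _ _ ↦ hg _

end FibreMean

section Product

variable {ι : Type*} [Fintype ι] {S : ι → Type*} {ρ : ∀ i, S i → ℝ}

/-- The product of the weights `ρ i` on the configuration space `∀ i, S i`. -/
def prodWeight (ρ : ∀ i, S i → ℝ) (x : ∀ i, S i) : ℝ := ∏ i, ρ i (x i)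

theorem prodWeight_nonneg (hρ0 : ∀ i u, 0 ≤ ρ i u) (x : ∀ i, S i) :
    0 ≤ prodWeight ρ x :=
  prod_nonneg fun i _ ↦ hρ0 i (x i)

variable [DecidableEq ι]

theorem prodWeight_update_mul (ρ : ∀ i, S i → ℝ) (i : ι) (x : ∀ i, S i) (u : S i) :
    prodWeight ρ (update x i u) * ρ i (x i) = prodWeight ρ x * ρ i u := by
  have hrest : ∏ j ∈ univ.erase i, ρ j (update x i u j) = ∏ j ∈ univ.erase i, ρ j (x j) :=
    prod_congr rfl fun j hj ↦ by rw [update_of_ne (ne_of_mem_erase hj)]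
  simp only [prodWeight, ← mul_prod_erase univ _ (mem_univ i), hrest, update_self]
  ring

variable [∀ i, Fintype (S i)]

theorem sum_prodWeight (hρ : ∀ i, ∑ u, ρ i u = 1) :
    ∑ x, prodWeight ρ x = 1 := by
  simp only [prodWeight, ← Fintype.prod_sum, hρ, prod_const_one]

theorem unif_pi : unif (∀ i, S i) = prodWeight fun i ↦ unif (S i) := by
  ext x
  simp [unif, prodWeight, Fintype.card_pi]

/-- Swapping `x i` with the resampled value is an involution preserving the joint weight. -/
theorem sum_prodWeight_mul_fibreMean (hρ : ∀ i, ∑ u, ρ i u = 1) (i : ι) (g : (∀ i, S i) → ℝ) :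
    ∑ x, prodWeight ρ x * fibreMean ρ i g x = ∑ x, prodWeight ρ x * g x := by
  have hswap : Involutive fun q : (∀ i, S i) × S i ↦ (update q.1 i q.2, q.1 i) := by
    rintro ⟨x, u⟩; simp
  calc ∑ x, prodWeight ρ x * fibreMean ρ i g x
      = ∑ q : (∀ i, S i) × S i, prodWeight ρ q.1 * ρ i q.2 * g (update q.1 i q.2) := by
        simp only [Fintype.sum_prod_type, fibreMean, mul_sum, mul_assoc]
    _ = ∑ q : (∀ i, S i) × S i, prodWeight ρ q.1 * ρ i q.2 * g q.1 :=
        Fintype.sum_bijective _ hswap.bijective _ _ fun q ↦ by rw [prodWeight_update_mul]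
    _ = ∑ x, prodWeight ρ x * g x := by
        simp only [Fintype.sum_prod_type, ← sum_mul, ← mul_sum, hρ, mul_one]

theorem ent_prodWeight_eq_add (hρ : ∀ i, ∑ u, ρ i u = 1) (i : ι) (g : (∀ i, S i) → ℝ) :
    ent (prodWeight ρ) g = ∑ x, prodWeight ρ x * ent (ρ i) (fun u ↦ g (update x i u)) +
      ent (prodWeight ρ) (fibreMean ρ i g) := by
  have hlog := sum_prodWeight_mul_fibreMean hρ i fun x ↦ g x * log (g x)
  have hmean := sum_prodWeight_mul_fibreMean hρ i g
  have hfibre : ∀ x, ent (ρ i) (fun u ↦ g (update x i u)) =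
      fibreMean ρ i (fun x ↦ g x * log (g x)) x -
        fibreMean ρ i g x * log (fibreMean ρ i g x) := fun x ↦ by
    simp only [ent, fibreMean, mul_assoc]
  simp only [hfibre, mul_sub, sum_sub_distrib, hlog]
  simp only [ent, hmean, mul_assoc]
  ring

theorem ent_prodWeight_le_of_dependsOn (hρ : ∀ i, ∑ u, ρ i u = 1)
    (hρ0 : ∀ i u, 0 ≤ ρ i u) (s : Finset ι) {g : (∀ i, S i) → ℝ} (hg : ∀ x, 0 ≤ g x)
    (hgs : DependsOn g s) :
    ent (prodWeight ρ) g ≤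
      ∑ i ∈ s, ∑ x, prodWeight ρ x * ent (ρ i) (fun u ↦ g (update x i u)) := by
  induction s using Finset.induction_on generalizing g with
  | empty =>
    rw [coe_empty] at hgs
    rw [sum_empty, ent_eq_zero_of_forall_eq (sum_prodWeight hρ) hgs.empty]
  | insert i s his ih =>
    have hmean : ∀ x, 0 ≤ fibreMean ρ i g x := fun x ↦
      sum_nonneg fun u _ ↦ mul_nonneg (hρ0 i u) (hg _)
    rw [sum_insert his, ent_prodWeight_eq_add hρ i g]
    gcongr
    refine (ih hmean (dependsOn_fibreMean ρ (by simpa using hgs))).trans ?_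
    refine sum_le_sum fun j hj ↦ ?_
    rw [← sum_prodWeight_mul_fibreMean hρ i fun y ↦ ent (ρ j) fun v ↦ g (update y j v)]
    gcongr with x
    · exact prodWeight_nonneg hρ0 x
    · exact ent_fibreMean_update_le hρ0 hg (ne_of_mem_of_not_mem hj his).symm x

theorem ent_prodWeight_le (hρ : ∀ i, ∑ u, ρ i u = 1) (hρ0 : ∀ i u, 0 ≤ ρ i u)
    {g : (∀ i, S i) → ℝ} (hg : ∀ x, 0 ≤ g x) :
    ent (prodWeight ρ) g ≤
      ∑ i, ∑ x, prodWeight ρ x * ent (ρ i) (fun u ↦ g (update x i u)) :=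
  ent_prodWeight_le_of_dependsOn hρ hρ0 univ hg (by simpa using dependsOn_univ g)

end Product

section CoordReplacement

variable {ι : Type*} [Fintype ι] [DecidableEq ι] {S : ι → Type*} [∀ i, Fintype (S i)]
  {K : ∀ i, (∀ j, S j) → Matrix (S i) (S i) ℝ} {ρ : ∀ i, S i → ℝ}

theorem sum_prodWeight_mul_dirichlet_update (hρ : ∀ i, ∑ u, ρ i u = 1) {i : ι}
    (hK : DependsOn (K i) {i}ᶜ) (F : (∀ i, S i) → ℝ) :
    ∑ x, prodWeight ρ x * dirichlet (ρ i) (K i x) (fun u ↦ F (update x i u)) =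
      (1 / 2) * ∑ x, prodWeight ρ x * ∑ v, K i x (x i) v * (F x - F (update x i v)) ^ 2 := by
  have hKu : ∀ x u, K i (update x i u) = K i x := fun x u ↦
    hK fun j hj ↦ update_of_ne hj u x
  rw [← sum_prodWeight_mul_fibreMean hρ i
    fun x ↦ ∑ v, K i x (x i) v * (F x - F (update x i v)) ^ 2, mul_sum]
  refine sum_congr rfl fun x _ ↦ ?_
  simp only [dirichlet, fibreMean, hKu, update_self, update_idem, mul_assoc, ← mul_sum]
  ring

variable [∀ i, DecidableEq (S i)]

/-- The coordinate-replacement kernel: pick a coordinate `i` uniformly at random, and move it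
according to the fibre kernel `K i x`. The kernels `K i` take the whole configuration as their
argument; that they only see the coordinates other than `i` is stated as `DependsOn (K i) {i}ᶜ`. -/
def coordReplacement (K : ∀ i, (∀ j, S j) → Matrix (S i) (S i) ℝ) :
    Matrix (∀ i, S i) (∀ i, S i) ℝ := fun x y ↦
  (1 / (Fintype.card ι : ℝ)) * ∑ i, ∑ u, if y = update x i u then K i x (x i) u else 0

theorem sum_coordReplacement_mul (K : ∀ i, (∀ j, S j) → Matrix (S i) (S i) ℝ) (x : ∀ i, S i)
    (f : (∀ i, S i) → ℝ) :
    ∑ y, coordReplacement K x y * f y =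
      (1 / (Fintype.card ι : ℝ)) * ∑ i, ∑ u, K i x (x i) u * f (update x i u) := by
  simp only [coordReplacement, mul_assoc, ← mul_sum, sum_mul]
  rw [sum_comm]
  congr! 2 with i
  rw [sum_comm]
  simp [ite_mul]

theorem dirichlet_coordReplacement (hρ : ∀ i, ∑ u, ρ i u = 1) (hK : ∀ i, DependsOn (K i) {i}ᶜ)
    (F : (∀ i, S i) → ℝ) :
    dirichlet (prodWeight ρ) (coordReplacement K) F = (1 / (Fintype.card ι : ℝ)) *
      ∑ i, ∑ x, prodWeight ρ x * dirichlet (ρ i) (K i x) (fun u ↦ F (update x i u)) := by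
  have hrow := fun x ↦ sum_coordReplacement_mul K x fun y ↦ (F x - F y) ^ 2
  rw [sum_congr rfl fun i _ ↦ sum_prodWeight_mul_dirichlet_update hρ (hK i) F, ← mul_sum,
    sum_comm]
  simp only [dirichlet, mul_assoc, ← mul_sum, hrow]
  simp only [mul_left_comm (prodWeight ρ _), ← mul_sum]
  ring

theorem stmt3_general [Nonempty ι] {p c : ℝ} (hp : 0 < p) (hpρ : ∀ i u, p ≤ ρ i u)
    (hρ : ∀ i, ∑ u, ρ i u = 1) (hK : ∀ i, DependsOn (K i) {i}ᶜ) {G : Set (∀ i, S i)}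
    (hpoincare : ∀ i x, (∃ u, update x i u ∈ G) →
      ∀ φ : S i → ℝ, var (ρ i) φ ≤ c * dirichlet (ρ i) (K i x) φ)
    {F : (∀ i, S i) → ℝ} (hF : support F ⊆ G) :
    ent (prodWeight ρ) (fun x ↦ F x ^ 2) ≤
      8 * (c * Fintype.card ι * log p⁻¹) * dirichlet (prodWeight ρ) (coordReplacement K) F := by
  have hρ0 : ∀ i u, 0 ≤ ρ i u := fun i u ↦ hp.le.trans (hpρ i u)
  have hfibre : ∀ i x, ent (ρ i) (fun u ↦ F (update x i u) ^ 2) ≤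
      8 * (c * log p⁻¹) * dirichlet (ρ i) (K i x) (fun u ↦ F (update x i u)) := fun i x ↦ by
    refine ent_sq_le_log_mul_dirichlet_of_poincare hp (hpρ i) (hρ i) fun hne ↦ ?_
    obtain ⟨u, hu⟩ := ne_iff.1 hne
    exact hpoincare i x ⟨u, hF hu⟩ _
  calc ent (prodWeight ρ) (fun x ↦ F x ^ 2)
      ≤ ∑ i, ∑ x, prodWeight ρ x * ent (ρ i) (fun u ↦ F (update x i u) ^ 2) :=
        ent_prodWeight_le hρ hρ0 fun x ↦ sq_nonneg (F x)
    _ ≤ ∑ i, ∑ x, prodWeight ρ x * (8 * (c * log p⁻¹) *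
          dirichlet (ρ i) (K i x) (fun u ↦ F (update x i u))) := by
        gcongr with i _ x
        · exact prodWeight_nonneg hρ0 x
        · exact hfibre i x
    _ = 8 * (c * Fintype.card ι * log p⁻¹) *
          dirichlet (prodWeight ρ) (coordReplacement K) F := by
        rw [dirichlet_coordReplacement hρ hK]
        simp only [mul_left_comm (prodWeight ρ _), ← mul_sum]
        field_simp

end CoordReplacement

theorem stmt3 :
    ∃ C : ℝ, 0 < C ∧
      ∀ (S : Type) [Fintype S] [DecidableEq S] [Nonempty S] (N : ℕ), 1 ≤ N →
      ∀ (K : Fin N → (Fin N → S) → Matrix S S ℝ) (P : Matrix (Fin N → S) (Fin N → S) ℝ)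
        (G : Set (Fin N → S)) (γ : ℝ),
        0 < γ →
        -- each fibre kernel is a Markov kernel on S, reversible wrt uniform measure
        (∀ i x u v, 0 ≤ K i x u v) →
        (∀ i x u, (∑ v, K i x u v) = 1) →
        (∀ i x u v, K i x u v = K i x v u) →
        -- the fibre kernel only depends on the coordinates off `i`
        (∀ i (x y : Fin N → S), (∀ j, j ≠ i → x j = y j) → K i x = K i y) →
        -- coordinate-replacement structure of `P`
        (∀ x y, P x y =
          (1 / (N : ℝ)) * ∑ i, ∑ u, (if y = Function.update x i u then K i x (x i) u else 0)) →
        -- `P` is reversible with respect to the uniform measure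
        (∀ x y, P x y = P y x) →
        -- fibres meeting `G` have spectral gap at least `γ`
        (∀ i (x : Fin N → S), (∃ u, Function.update x i u ∈ G) →
          ∀ φ : S → ℝ, var (unif S) φ ≤ (1 / γ) * dirichlet (unif S) (K i x) φ) →
        ∀ F : (Fin N → S) → ℝ, (∀ x, 0 ≤ F x) → (∀ x, F x ≠ 0 → x ∈ G) →
          ent (unif (Fin N → S)) (fun x => (F x) ^ 2) ≤
            C * ((N : ℝ) * Real.log (Fintype.card S) / γ) *
              dirichlet (unif (Fin N → S)) P F := by
  refine ⟨8, by norm_num, ?_⟩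
  intro S _ _ _ N hN K P G γ _ _ _ _ hK hP _ hgap F _ hF
  have : Nonempty (Fin N) := ⟨⟨0, hN⟩⟩
  obtain rfl : P = coordReplacement K := by
    ext x y; rw [hP, coordReplacement, Fintype.card_fin]
  have hmain := stmt3_general (ρ := fun _ ↦ unif S) (p := (Fintype.card S : ℝ)⁻¹) (by positivity)
    (fun _ _ ↦ le_rfl) (fun _ ↦ sum_unif S) hK hgap hF
  rw [inv_inv, Fintype.card_fin, ← unif_pi] at hmain
  convert hmain using 3
  ring
end
end

section
/- Fix an odd prime p and ε ∈ (0,1), and let β₀ = β₀(p,ε) ∈ (1/p, 1) satisfy ε·log p < I_p(β₀). There is a constant c_{p,ε} > 0 such that, for all sufficiently large r and all h ≤ ε·r: π(G_H^c) ≤ e^{−c_{p,ε}·r}, where π is uniform on Ω = V_r(H); and moreover μ(G_H^c) → 0 as r → ∞, where μ is uniform on H^r and G_H^c is the complement taken inside H^r. -/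
noncomputable section

/-- Data of a bilinear form on `W` turning `W × ZMod p` into a Heisenberg group. -/
class HeisData (p : ℕ) (W : Type*) [Fact (Nat.Prime p)] [AddCommGroup W]
    [Module (ZMod p) W] where
  ω : W →ₗ[ZMod p] W →ₗ[ZMod p] ZMod p

/-- The Heisenberg group structure on `W × ZMod p`:
`(v,z)·(w,t) = (v+w, z+t+ω(v,w)/2)`. -/
instance heisGroup (p : ℕ) (W : Type*) [Fact (Nat.Prime p)] [AddCommGroup W]
    [Module (ZMod p) W] [HeisData p W] : Group (W × ZMod p) where
  mul x y := (x.1 + y.1, x.2 + y.2 + (2 : ZMod p)⁻¹ * HeisData.ω x.1 y.1)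
  one := ((0 : W), (0 : ZMod p))
  inv x := (-x.1, -x.2 + (2 : ZMod p)⁻¹ * HeisData.ω x.1 x.1)
  mul_assoc a b c := by
    refine Prod.ext ?_ ?_
    · show a.1 + b.1 + c.1 = a.1 + (b.1 + c.1)
      exact add_assoc _ _ _
    · show a.2 + b.2 + (2 : ZMod p)⁻¹ * HeisData.ω a.1 b.1 + c.2 +
          (2 : ZMod p)⁻¹ * HeisData.ω (a.1 + b.1) c.1 =
        a.2 + (b.2 + c.2 + (2 : ZMod p)⁻¹ * HeisData.ω b.1 c.1) +
          (2 : ZMod p)⁻¹ * HeisData.ω a.1 (b.1 + c.1)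
      simp only [map_add, LinearMap.add_apply]
      ring
  one_mul a := by
    refine Prod.ext ?_ ?_
    · show 0 + a.1 = a.1; simp
    · show 0 + a.2 + (2 : ZMod p)⁻¹ * HeisData.ω 0 a.1 = a.2
      simp
  mul_one a := by
    refine Prod.ext ?_ ?_
    · show a.1 + 0 = a.1; simp
    · show a.2 + 0 + (2 : ZMod p)⁻¹ * HeisData.ω a.1 0 = a.2
      simp
  inv_mul_cancel a := by
    refine Prod.ext ?_ ?_
    · show -a.1 + a.1 = 0; simp
    · show -a.2 + (2 : ZMod p)⁻¹ * HeisData.ω a.1 a.1 + a.2 +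
          (2 : ZMod p)⁻¹ * HeisData.ω (-a.1) a.1 = 0
      simp only [map_neg, LinearMap.neg_apply]
      ring

/-- Tuples generating the whole group. -/
def genSet (r : ℕ) (H : Type*) [Group H] : Set (Fin r → H) :=
  {g | Subgroup.closure (Set.range g) = ⊤}

/-- `N_ξ(g) = #{i : ξ(v_i) = 0}`, where `g i = (v_i, z_i)`. -/
def NXi {p : ℕ} {W : Type*} [Fact (Nat.Prime p)] [AddCommGroup W] [Module (ZMod p) W]
    {r : ℕ} (ξ : W →ₗ[ZMod p] ZMod p) (g : Fin r → W × ZMod p) : ℕ :=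
  (Finset.univ.filter fun i => ξ (g i).1 = 0).card

/-- The good set `G_H = {g ∈ Ω : N_ξ(g) ≤ β₀ r for every nonzero ξ}`. -/
def GH (p : ℕ) (W : Type*) [Fact (Nat.Prime p)] [AddCommGroup W] [Module (ZMod p) W]
    [HeisData p W] (β₀ : ℝ) (r : ℕ) : Set (Fin r → W × ZMod p) :=
  {g | g ∈ genSet r (W × ZMod p) ∧
    ∀ ξ : W →ₗ[ZMod p] ZMod p, ξ ≠ 0 → (NXi ξ g : ℝ) ≤ β₀ * r}

/-- The large-deviation rate `I_p(β) = β log(βp) + (1−β) log((1−β)p/(p−1))`. -/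
def Ip (p : ℕ) (β : ℝ) : ℝ :=
  β * Real.log (β * p) + (1 - β) * Real.log ((1 - β) * p / ((p : ℝ) - 1))

/-!
When `p` is odd and `ω` is not symmetric, commutators of elements of a subgroup that projects onto
`W` fill the central `ZMod p`, so such a subgroup is everything. Hence a tuple outside `GH` has more
than `β₀ r` of its entries in one of the fewer than `p ^ h` hyperplanes `ξ = 0`. Each entry of a
uniform tuple lies there with probability `1 / p`, so by Chernoff this has probability at most
`exp (-I_p(β₀) r)`, and the union bound gives `μ(GHᶜ) ≤ exp (-(I_p(β₀) - ε log p) r)`. Since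
`GH ⊆ Ω`, conditioning on `Ω` only decreases the probability of the complement:
`π(GHᶜ) ≤ μ(GHᶜ)`.
-/

open Finset
open scoped commutatorElement

section Counting

variable {α ι : Type*}

lemma card_inter_compl_div_le_card_compl_div [Finite α] {A B : Set α} (hAB : A ⊆ B) :
    (Nat.card ↥(B ∩ Aᶜ) : ℝ) / Nat.card ↥B ≤ (Nat.card ↥Aᶜ : ℝ) / Nat.card α := by
  simp only [Nat.card_coe_set_eq]
  obtain rfl | hB := B.eq_empty_or_nonempty
  · simp only [Set.empty_inter, Set.ncard_empty, Nat.cast_zero, zero_div]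
    positivity
  have hBpos : 0 < B.ncard := (Set.ncard_pos B.toFinite).mpr hB
  have hα : B.ncard + Bᶜ.ncard = Nat.card α := Set.ncard_add_ncard_compl B
  have hAc : (B ∩ Aᶜ).ncard + Bᶜ.ncard = Aᶜ.ncard := by
    rw [← Set.ncard_inter_add_ncard_sdiff_eq_ncard Aᶜ B (Set.toFinite _), Set.inter_comm,
      Set.sdiff_eq, Set.inter_eq_right.mpr (Set.compl_subset_compl.mpr hAB)]
  have hle : (B ∩ Aᶜ).ncard ≤ B.ncard := Set.ncard_le_ncard Set.inter_subset_left B.toFinite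
  rw [← hα, ← hAc, div_le_div_iff₀ (by positivity) (by positivity)]
  norm_cast
  nlinarith

lemma ncard_iUnion_le_card_mul [Finite ι] {A : ι → Set α} {x : ℝ}
    (hA : ∀ i, ((A i).ncard : ℝ) ≤ x) : ((⋃ i, A i).ncard : ℝ) ≤ Nat.card ι * x := by
  have := Fintype.ofFinite ι
  calc ((⋃ i, A i).ncard : ℝ) ≤ ∑ i, ((A i).ncard : ℝ) := 
        mod_cast Set.ncard_iUnion_le_of_fintype A
    _ ≤ ∑ _i : ι, x := sum_le_sum fun i _ ↦ hA i
    _ = Nat.card ι * x := by simp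

end Counting

section Chernoff

/-- The odds ratio of success probabilities `β` and `1 / p`. This is the base `t` for which the
exponential Markov bound `𝔼[t ^ N] / t ^ (β r)` is smallest when `N` is Binomial(`r`, `1 / p`). -/
def chernoffTilt (p : ℕ) (β : ℝ) : ℝ := β * (p - 1) / (1 - β)

variable {p : ℕ} {β : ℝ}

lemma one_le_chernoffTilt (hp : 0 < p) (hβ : 1 / (p : ℝ) < β) (hβ₁ : β < 1) :
    1 ≤ chernoffTilt p β := by
  rw [div_lt_iff₀ (by positivity)] at hβ
  rw [chernoffTilt, le_div_iff₀ (by linarith)]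
  linarith

-- `I_p` is the Legendre transform of `s ↦ log ((eˢ + p - 1) / p)`, attained at `eˢ = chernoffTilt`.
lemma Ip_eq_mul_log_chernoffTilt_sub_log (hp : 1 < p) (hβ : 0 < β) (hβ₁ : β < 1) :
    Ip p β = β * Real.log (chernoffTilt p β) - Real.log ((chernoffTilt p β + (p - 1)) / p) := by
  have hp₁ : (0 : ℝ) < p - 1 := sub_pos.mpr (mod_cast hp)
  have hp₀ : (0 : ℝ) < p := by linarith
  have hβ' : 0 < 1 - β := sub_pos.mpr hβ₁
  have htilt : chernoffTilt p β + (p - 1) = (p - 1) / (1 - β) := by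
    rw [chernoffTilt]
    field_simp
    ring
  rw [htilt, chernoffTilt, Ip]
  simp only [Real.log_div, Real.log_mul, hp₀.ne', hp₁.ne', hβ.ne', hβ'.ne', ne_eq, mul_eq_zero,
    div_eq_zero_iff, or_self, not_false_eq_true]
  ring

lemma ncard_lt_mul_rpow_le_sum_pow {α : Type*} [Fintype α] (N : α → ℕ) {t : ℝ} (ht : 1 ≤ t)
    (x : ℝ) : ({a | x < N a}.ncard : ℝ) * t ^ x ≤ ∑ a, t ^ N a := by
  classical
  calc ({a | x < N a}.ncard : ℝ) * t ^ x = ∑ a with x < N a, t ^ x := by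
        rw [sum_const, nsmul_eq_mul, Set.ncard_eq_toFinset_card', Set.toFinset_ofPred]
    _ ≤ ∑ a with x < N a, t ^ N a := sum_le_sum fun a ha ↦ by
        rw [← Real.rpow_natCast]
        exact Real.rpow_le_rpow_of_exponent_le ht (mem_filter.mp ha).2.le
    _ ≤ ∑ a, t ^ N a :=
        sum_le_sum_of_subset_of_nonneg (filter_subset _ _) fun _ _ _ ↦ by positivity

variable {ι α : Type*} [Fintype ι] [Fintype α] (P : α → Prop) [DecidablePred P]

lemma sum_pow_card_filter_eq_pow [DecidableEq ι] {R : Type*} [CommSemiring R] (t : R) :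
    ∑ g : ι → α, t ^ #{i | P (g i)} =
      (#{a | P a} * t + #{a | ¬ P a}) ^ Fintype.card ι := by
  calc ∑ g : ι → α, t ^ #{i | P (g i)} = ∑ g : ι → α, ∏ i, if P (g i) then t else 1 := by
        simp only [prod_ite, prod_const, one_pow, mul_one]
    _ = ∏ _i : ι, ∑ a, if P a then t else 1 :=
        (Fintype.prod_sum fun _ a ↦ if P a then t else 1).symm
    _ = (#{a | P a} * t + #{a | ¬ P a}) ^ Fintype.card ι := by
        simp only [sum_ite, sum_const, nsmul_eq_mul, mul_one, prod_const, card_univ]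

theorem ncard_mul_lt_card_filter_le_exp_neg_Ip (hp : 1 < p) (hβ : 1 / (p : ℝ) < β) (hβ₁ : β < 1)
    (hP : Fintype.card α = p * #{a | P a}) :
    ({g : ι → α | β * Fintype.card ι < #{i | P (g i)}}.ncard : ℝ) ≤
      Real.exp (-(Ip p β * Fintype.card ι)) * Nat.card (ι → α) := by
  classical
  have hp₀ : 0 < p := by lia
  have ht := one_le_chernoffTilt hp₀ hβ hβ₁
  have hI := Ip_eq_mul_log_chernoffTilt_sub_log hp (lt_trans (by positivity) hβ) hβ₁
  set t := chernoffTilt p β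
  set r := Fintype.card ι
  have ht₀ : 0 < t := by linarith
  have hq₀ : 0 < (t + (p - 1)) / p := by
    have : (1 : ℝ) < p := mod_cast hp
    apply div_pos <;> linarith
  have hmgf : #{a | P a} * t + #{a | ¬ P a} = Fintype.card α * ((t + (p - 1)) / p) := by
    have hnot : (#{a | P a} + #{a | ¬ P a} : ℝ) = p * #{a | P a} := by
      rw [← Nat.cast_mul, ← hP, ← card_univ]
      exact_mod_cast card_filter_add_card_filter_not P
    rw [hP, eq_sub_of_add_eq' hnot]
    push_cast
    field_simp
  refine le_of_mul_le_mul_right ?_ (Real.rpow_pos_of_pos ht₀ (β * r))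
  calc ({g : ι → α | β * r < #{i | P (g i)}}.ncard : ℝ) * t ^ (β * r)
      ≤ ∑ g : ι → α, t ^ #{i | P (g i)} := ncard_lt_mul_rpow_le_sum_pow _ ht _
    _ = (Fintype.card α * ((t + (p - 1)) / p)) ^ r := by rw [sum_pow_card_filter_eq_pow, hmgf]
    _ = Nat.card (ι → α) * Real.exp (Real.log ((t + (p - 1)) / p) * r) := by
        rw [mul_pow, mul_comm (Real.log _), Real.exp_nat_mul, Real.exp_log hq₀, Nat.card_fun,
          Nat.card_eq_fintype_card, Nat.card_eq_fintype_card, Nat.cast_pow]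
    _ = Real.exp (-(Ip p β * r)) * Nat.card (ι → α) * t ^ (β * r) := by
        rw [Real.rpow_def_of_pos ht₀, mul_right_comm, ← Real.exp_add, mul_comm, hI]
        ring_nf

end Chernoff

section LinearAlgebra

variable {F V : Type*} [Field F] [AddCommGroup V] [Module F V]

lemma card_eq_card_mul_card_filter_eq_zero [Fintype F] [DecidableEq F] [Fintype V]
    {f : V →ₗ[F] F} (hf : f ≠ 0) :
    Fintype.card V = Fintype.card F * #{v | f v = 0} := by
  have hindex : f.toAddMonoidHom.ker.index = Nat.card F := by
    rw [AddSubgroup.index_ker, AddMonoidHom.range_eq_top.mpr (LinearMap.surjective hf),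
      AddSubgroup.card_top]
  rw [← Nat.card_eq_fintype_card, ← Nat.card_eq_fintype_card, ← hindex,
    ← f.toAddMonoidHom.ker.index_mul_card, ← Fintype.card_subtype, ← Nat.card_eq_fintype_card]
  rfl

lemma natCard_dual_ne_zero_le_exp [Finite F] [Finite V] {x : ℝ} (hx : Module.finrank F V ≤ x) :
    (Nat.card {f : V →ₗ[F] F // f ≠ 0} : ℝ) ≤ Real.exp (x * Real.log (Nat.card F)) := by
  have hF : (1 : ℝ) ≤ Nat.card F := mod_cast Nat.card_pos
  have : Finite (V →ₗ[F] F) := Module.finite_of_finite F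
  calc (Nat.card {f : V →ₗ[F] F // f ≠ 0} : ℝ) ≤ Nat.card (V →ₗ[F] F) :=
        mod_cast Finite.card_subtype_le _
    _ = (Nat.card F : ℝ) ^ (Module.finrank F V : ℝ) := by
        rw [Module.natCard_eq_pow_finrank (K := F), Subspace.dual_finrank_eq, Nat.cast_pow,
          Real.rpow_natCast]
    _ ≤ (Nat.card F : ℝ) ^ x := Real.rpow_le_rpow_of_exponent_le hF hx
    _ = Real.exp (x * Real.log (Nat.card F)) := by
        rw [Real.rpow_def_of_pos (by linarith), mul_comm]

lemma span_eq_top_of_forall_dual {s : Set V}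
    (hs : ∀ f : V →ₗ[F] F, (∀ v ∈ s, f v = 0) → f = 0) : Submodule.span F s = ⊤ := by
  by_contra hne
  obtain ⟨f, hf, hle⟩ := Submodule.exists_le_ker_of_lt_top _ (lt_top_iff_ne_top.mpr hne)
  exact hf (hs f fun v hv ↦ hle (Submodule.subset_span hv))

lemma not_isSymm_of_isAlt_of_separatingLeft [Nontrivial V] (h2 : (2 : F) ≠ 0)
    {B : V →ₗ[F] V →ₗ[F] F} (hB : B.IsAlt) (hsep : B.SeparatingLeft) : ¬ B.IsSymm := by
  intro hsymm
  obtain ⟨v, hv⟩ := exists_ne (0 : V)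
  refine hv (hsep v fun w ↦ ?_)
  have htwice : 2 * B v w = 0 := by linear_combination hsymm.eq v w - hB.neg v w
  exact (mul_eq_zero.mp htwice).resolve_left h2

end LinearAlgebra

lemma two_ne_zero_zmod {p : ℕ} [Fact p.Prime] (hp : p ≠ 2) : (2 : ZMod p) ≠ 0 :=
  Ring.two_ne_zero (by rwa [ZMod.ringChar_zmod_n])

section Heisenberg

variable {p : ℕ} [Fact p.Prime] {W : Type*} [AddCommGroup W] [Module (ZMod p) W] {r : ℕ}

lemma ncard_lt_NXi_le_exp_neg_Ip [Finite W] {β : ℝ} (hβ : 1 / (p : ℝ) < β) (hβ₁ : β < 1)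
    {ξ : W →ₗ[ZMod p] ZMod p} (hξ : ξ ≠ 0) :
    ({g : Fin r → W × ZMod p | β * r < NXi ξ g}.ncard : ℝ) ≤
      Real.exp (-(Ip p β * r)) * Nat.card (Fin r → W × ZMod p) := by
  have := Fintype.ofFinite W
  have hcomp : ξ ∘ₗ LinearMap.fst (ZMod p) W (ZMod p) ≠ 0 := fun h ↦
    hξ (LinearMap.ext fun w ↦ LinearMap.congr_fun h (w, 0))
  have hcard := card_eq_card_mul_card_filter_eq_zero hcomp
  rw [ZMod.card] at hcard
  have hchernoff := ncard_mul_lt_card_filter_le_exp_neg_Ip (ι := Fin r) _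
    (Fact.out : p.Prime).one_lt hβ hβ₁ hcard
  rwa [Fintype.card_fin] at hchernoff

variable [HeisData p W]

lemma heis_mul_def (x y : W × ZMod p) :
    x * y = (x.1 + y.1, x.2 + y.2 + (2 : ZMod p)⁻¹ * HeisData.ω x.1 y.1) := rfl

lemma heis_commutatorElement (x y : W × ZMod p) :
    ⁅x, y⁆ = (0, (2 : ZMod p)⁻¹ * (HeisData.ω x.1 y.1 - HeisData.ω y.1 x.1)) := by
  rw [commutatorElement_def, mul_assoc, ← mul_inv_rev, mul_inv_eq_iff_eq_mul]
  simp only [heis_mul_def, map_zero, LinearMap.zero_apply]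
  ext
  · simp [add_comm]
  · simp only
    ring

/-- The image in `W` of a subgroup of the Heisenberg group `W × ZMod p`, as a subspace. -/
def heisProj (K : Subgroup (W × ZMod p)) : Submodule (ZMod p) W :=
  AddSubgroup.toZModSubmodule p
    { carrier := {w | ∃ z : ZMod p, (w, z) ∈ K}
      zero_mem' := ⟨0, K.one_mem⟩
      add_mem' := fun ⟨_, hx⟩ ⟨_, hy⟩ ↦ ⟨_, K.mul_mem hx hy⟩
      neg_mem' := fun ⟨_, hx⟩ ↦ ⟨_, K.inv_mem hx⟩ }

lemma mem_heisProj {K : Subgroup (W × ZMod p)} {w : W} :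
    w ∈ heisProj K ↔ ∃ z : ZMod p, (w, z) ∈ K := Iff.rfl

lemma central_mem_of_heisProj_eq_top (hp : p ≠ 2)
    (hω : ¬ (HeisData.ω : W →ₗ[ZMod p] W →ₗ[ZMod p] ZMod p).IsSymm)
    {K : Subgroup (W × ZMod p)} (hK : heisProj K = ⊤) (t : ZMod p) : ((0 : W), t) ∈ K := by
  have hlift (w : W) : ∃ z : ZMod p, (w, z) ∈ K := mem_heisProj.mp (hK ▸ Submodule.mem_top)
  obtain ⟨v, w, hvw⟩ : ∃ v w : W, HeisData.ω (p := p) v w ≠ HeisData.ω w v := by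
    by_contra! h
    exact hω ⟨h⟩
  set d := HeisData.ω (p := p) v w - HeisData.ω w v with hd
  have hd₀ : d ≠ 0 := sub_ne_zero.mpr hvw
  obtain ⟨a, ha⟩ := hlift ((2 * t / d) • v)
  obtain ⟨b, hb⟩ := hlift w
  have hcomm : ⁅(((2 * t / d) • v, a) : W × ZMod p), (w, b)⁆ = (0, t) := by
    rw [heis_commutatorElement]
    simp only [map_smul, LinearMap.smul_apply, smul_eq_mul, ← mul_sub, ← hd]
    rw [div_mul_cancel₀ _ hd₀, inv_mul_cancel_left₀ (two_ne_zero_zmod hp)]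
  rw [← hcomm, commutatorElement_def]
  exact K.mul_mem (K.mul_mem (K.mul_mem ha hb) (K.inv_mem ha)) (K.inv_mem hb)

lemma eq_top_of_heisProj_eq_top (hp : p ≠ 2)
    (hω : ¬ (HeisData.ω : W →ₗ[ZMod p] W →ₗ[ZMod p] ZMod p).IsSymm)
    {K : Subgroup (W × ZMod p)} (hK : heisProj K = ⊤) : K = ⊤ := by
  rw [eq_top_iff]
  rintro ⟨w, z⟩ -
  obtain ⟨z', hz'⟩ : w ∈ heisProj K := hK ▸ Submodule.mem_top
  have hmul := K.mul_mem hz' (central_mem_of_heisProj_eq_top hp hω hK (z - z'))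
  simpa [heis_mul_def] using hmul

lemma mem_genSet_of_span_eq_top (hp : p ≠ 2)
    (hω : ¬ (HeisData.ω : W →ₗ[ZMod p] W →ₗ[ZMod p] ZMod p).IsSymm)
    {g : Fin r → W × ZMod p}
    (hg : Submodule.span (ZMod p) (Set.range fun i ↦ (g i).1) = ⊤) :
    g ∈ genSet r (W × ZMod p) := by
  refine eq_top_of_heisProj_eq_top hp hω (top_le_iff.mp (hg ▸ Submodule.span_le.mpr ?_))
  rintro _ ⟨i, rfl⟩
  exact ⟨(g i).2, Subgroup.subset_closure ⟨i, rfl⟩⟩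

lemma compl_GH_subset_iUnion (hp : p ≠ 2)
    (hω : ¬ (HeisData.ω : W →ₗ[ZMod p] W →ₗ[ZMod p] ZMod p).IsSymm)
    {β : ℝ} (hβ₁ : β < 1) (hr : r ≠ 0) :
    (GH p W β r)ᶜ ⊆
      ⋃ ξ : {ξ : W →ₗ[ZMod p] ZMod p // ξ ≠ 0}, {g | β * r < NXi ξ.1 g} := by
  rw [Set.compl_subset_comm]
  intro g hg
  have hN (ξ : W →ₗ[ZMod p] ZMod p) (hξ : ξ ≠ 0) : (NXi ξ g : ℝ) ≤ β * r := by
    by_contra! hlt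
    exact hg (Set.mem_iUnion.mpr ⟨⟨ξ, hξ⟩, hlt⟩)
  refine ⟨mem_genSet_of_span_eq_top hp hω (span_eq_top_of_forall_dual fun ξ hξ ↦ ?_), hN⟩
  by_contra hne
  have hfull : NXi ξ g = r := by simp [NXi, fun i ↦ hξ _ ⟨i, rfl⟩]
  have hr₀ : (0 : ℝ) < r := by positivity
  nlinarith [hfull ▸ hN ξ hne]

theorem card_compl_GH_div_le [Finite W] (hp : p ≠ 2)
    (hω : ¬ (HeisData.ω : W →ₗ[ZMod p] W →ₗ[ZMod p] ZMod p).IsSymm)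
    {ε β : ℝ} (hβ : 1 / (p : ℝ) < β) (hβ₁ : β < 1) (hr : Module.finrank (ZMod p) W ≤ ε * r) :
    (Nat.card ↥(GH p W β r)ᶜ : ℝ) / Nat.card (Fin r → W × ZMod p) ≤
      Real.exp (-((Ip p β - ε * Real.log p) * r)) := by
  obtain rfl | hr₀ := eq_or_ne r 0
  · have hcard : (Nat.card ↥(GH p W β 0)ᶜ : ℝ) ≤ Nat.card (Fin 0 → W × ZMod p) :=
      mod_cast Finite.card_subtype_le _
    simpa using div_le_one_of_le₀ hcard (Nat.cast_nonneg _)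
  have : Finite (W →ₗ[ZMod p] ZMod p) := Module.finite_of_finite (ZMod p)
  have hfunctionals := natCard_dual_ne_zero_le_exp hr
  rw [Nat.card_zmod] at hfunctionals
  set x := Real.exp (-(Ip p β * r)) * Nat.card (Fin r → W × ZMod p)
  refine div_le_of_le_mul₀ (Nat.cast_nonneg _) (Real.exp_pos _).le ?_
  calc (Nat.card ↥(GH p W β r)ᶜ : ℝ)
      ≤ (⋃ ξ : {ξ : W →ₗ[ZMod p] ZMod p // ξ ≠ 0},
          {g : Fin r → W × ZMod p | β * r < NXi ξ.1 g}).ncard :=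
        mod_cast Set.ncard_le_ncard (compl_GH_subset_iUnion hp hω hβ₁ hr₀) (Set.toFinite _)
    _ ≤ Nat.card {ξ : W →ₗ[ZMod p] ZMod p // ξ ≠ 0} * x :=
        ncard_iUnion_le_card_mul fun ξ ↦ ncard_lt_NXi_le_exp_neg_Ip hβ hβ₁ ξ.2
    _ ≤ Real.exp (ε * r * Real.log p) * x := by gcongr
    _ = Real.exp (-((Ip p β - ε * Real.log p) * r)) * Nat.card (Fin r → W × ZMod p) := by
        rw [← mul_assoc, ← Real.exp_add]
        ring_nf

end Heisenberg

lemma exists_forall_ge_exp_neg_mul_le {c η : ℝ} (hc : 0 < c) (hη : 0 < η) :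
    ∃ r₁ : ℕ, ∀ r : ℕ, r₁ ≤ r → Real.exp (-(c * r)) ≤ η :=
  Filter.eventually_atTop.mp <|
    (Real.tendsto_exp_neg_atTop_nhds_zero.comp
      (tendsto_natCast_atTop_atTop.const_mul_atTop hc)).eventually (ge_mem_nhds hη)

theorem stmt12_general {p : ℕ} [Fact p.Prime] (hp : p ≠ 2) {W : Type*} [AddCommGroup W]
    [Module (ZMod p) W] [Finite W] [HeisData p W]
    (hω : ¬ (HeisData.ω : W →ₗ[ZMod p] W →ₗ[ZMod p] ZMod p).IsSymm) {ε β₀ : ℝ}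
    (hβ : 1 / (p : ℝ) < β₀) (hβ₁ : β₀ < 1) {r : ℕ} (hr : Module.finrank (ZMod p) W ≤ ε * r) :
    (Nat.card ↥(genSet r (W × ZMod p) ∩ (GH p W β₀ r)ᶜ) : ℝ) /
        Nat.card ↥(genSet r (W × ZMod p)) ≤ Real.exp (-((Ip p β₀ - ε * Real.log p) * r)) ∧
      (Nat.card ↥(GH p W β₀ r)ᶜ : ℝ) / Nat.card (Fin r → W × ZMod p) ≤
        Real.exp (-((Ip p β₀ - ε * Real.log p) * r)) :=
  have hμ := card_compl_GH_div_le hp hω hβ hβ₁ hr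
  ⟨(card_inter_compl_div_le_card_compl_div fun _ hg ↦ hg.1).trans hμ, hμ⟩

lemma heis_not_isSymm {p : ℕ} [Fact p.Prime] (hp : p ≠ 2) {W : Type*} [AddCommGroup W]
    [Module (ZMod p) W] [HeisData p W] (hW : 0 < Module.finrank (ZMod p) W)
    (halt : ∀ v : W, HeisData.ω (p := p) v v = 0)
    (hnd : ∀ v : W, (∀ w : W, HeisData.ω (p := p) v w = 0) → v = 0) :
    ¬ (HeisData.ω : W →ₗ[ZMod p] W →ₗ[ZMod p] ZMod p).IsSymm :=
  have : Nontrivial W := Module.nontrivial_of_finrank_pos hW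
  not_isSymm_of_isAlt_of_separatingLeft (two_ne_zero_zmod hp) halt hnd

theorem stmt12 :
    ∀ (p : ℕ) [Fact (Nat.Prime p)], p ≠ 2 →
    ∀ ε β₀ : ℝ, 0 < ε → ε < 1 → 1 / (p : ℝ) < β₀ → β₀ < 1 →
      ε * Real.log p < Ip p β₀ →
      -- π(G_H^c) ≤ e^{−c r} uniformly for h ≤ ε r, for large r
      (∃ c : ℝ, 0 < c ∧ ∃ r₀ : ℕ, ∀ r : ℕ, r₀ ≤ r →
        ∀ (m : ℕ) (W : Type) [AddCommGroup W] [Module (ZMod p) W] [Fintype W]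
          [DecidableEq W] [HeisData p W],
          1 ≤ m → Module.finrank (ZMod p) W = 2 * m →
          (∀ v : W, HeisData.ω (p := p) v v = 0) →
          (∀ v : W, (∀ w : W, HeisData.ω (p := p) v w = 0) → v = 0) →
          (2 * m : ℝ) ≤ ε * r →
          (Nat.card ↥(genSet r (W × ZMod p) ∩ (GH p W β₀ r)ᶜ) : ℝ) /
              (Nat.card ↥(genSet r (W × ZMod p)) : ℝ) ≤ Real.exp (-(c * r))) ∧
      -- μ(G_H^c) → 0 as r → ∞ (complement taken inside H^r)
      (∀ η : ℝ, 0 < η → ∃ r₁ : ℕ, ∀ r : ℕ, r₁ ≤ r →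
        ∀ (m : ℕ) (W : Type) [AddCommGroup W] [Module (ZMod p) W] [Fintype W]
          [DecidableEq W] [HeisData p W],
          1 ≤ m → Module.finrank (ZMod p) W = 2 * m →
          (∀ v : W, HeisData.ω (p := p) v v = 0) →
          (∀ v : W, (∀ w : W, HeisData.ω (p := p) v w = 0) → v = 0) →
          (2 * m : ℝ) ≤ ε * r →
          (Nat.card ↥((GH p W β₀ r)ᶜ) : ℝ) /
              (Fintype.card (Fin r → W × ZMod p) : ℝ) ≤ η) := by
  intro p _ hp ε β₀ _ _ hβ hβ₁ hI
  have hc : 0 < Ip p β₀ - ε * Real.log p := sub_pos.mpr hI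
  refine ⟨⟨_, hc, 0, ?_⟩, fun η hη ↦ ?_⟩
  · intro r _ m W _ _ _ _ _ hm hW halt hnd hmr
    exact (stmt12_general hp (heis_not_isSymm hp (by lia) halt hnd) hβ hβ₁
      (by rw [hW]; exact_mod_cast hmr)).1
  · obtain ⟨r₁, hr₁⟩ := exists_forall_ge_exp_neg_mul_le hc hη
    refine ⟨r₁, fun r hr m W _ _ _ _ _ hm hW halt hnd hmr ↦ ?_⟩
    rw [← Nat.card_eq_fintype_card]
    exact (stmt12_general hp (heis_not_isSymm hp (by lia) halt hnd) hβ hβ₁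
      (by rw [hW]; exact_mod_cast hmr)).2.trans (hr₁ r hr)
end
end

section
/- Fix an odd prime p and 0 < α₀ < α₁ < (p−1)/p, and define J_p(α₀,α₁) = ∫_{α₀}^{α₁} log((p−1)(1−u)/u) du. For every η > 0 there is r₀ such that for all r ≥ r₀ and every T ≤ r³: sup_{s ≥ α₁·r} P_s( inf_{0≤t≤T} S_t < α₀·r ) ≤ T·exp(−(J_p(α₀,α₁) − η)·r), where (S_t) is the birth–death chain on {1,…,r} with rates B_s, D_s. -/
open Finset

noncomputable section

/-- Birth probability from state `s` (real-valued). -/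
def bdB (p r : ℕ) (s : ℝ) : ℝ := (((p : ℝ) - 1) / p) * (s * ((r : ℝ) - s)) / ((r : ℝ) * ((r : ℝ) - 1))

/-- Death probability from state `s` (real-valued). -/
def bdD (p r : ℕ) (s : ℝ) : ℝ := (1 / (p : ℝ)) * (s * (s - 1)) / ((r : ℝ) * ((r : ℝ) - 1))

/-- The birth–death chain on `{1,…,r}` (state `i : Fin r` has value `i+1`). -/
def bdM (p r : ℕ) : Matrix (Fin r) (Fin r) ℝ := fun i j =>
  if (j : ℕ) = (i : ℕ) + 1 then bdB p r ((i : ℕ) + 1)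
  else if ((j : ℕ) + 1) = (i : ℕ) then bdD p r ((i : ℕ) + 1)
  else if j = i then 1 - bdB p r ((i : ℕ) + 1) - bdD p r ((i : ℕ) + 1)
  else 0

/-- The chain killed on entering `{s : s < α₀ r}`. -/
def bdKillLow (p r : ℕ) (α₀ : ℝ) : Matrix (Fin r) (Fin r) ℝ := fun i j =>
  if (α₀ * r ≤ ((i : ℕ) + 1 : ℝ)) ∧ (α₀ * r ≤ ((j : ℕ) + 1 : ℝ)) then bdM p r i j else 0

/-!
Let `φ : ℕ → ℝ` be nonnegative with `φ k ≥ 1` for the largest `k` below `α₀ r` and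
`D (s + 1) * φ s ≤ B (s + 1) * φ (s + 1)` for `k ≤ s < n`, where `n` is the largest integer below
`α₁ r`. Then `V s = ∑ l ∈ [s, n], φ l` is at least `1` below `α₀ r`, vanishes from `α₁ r` on, and
its expectation increases by at most `φ n` in one step of the chain (only the step down from
`n + 1` makes it increase). Hence the chain started above `α₁ r` goes below `α₀ r` by time `T` with
probability at most `T * φ n`.

At density `u = s / r` the ratio `B / D` tends to `(p - 1) (1 - u) / u`, so
`φ s = exp (-r ∫ u in α₀..s/r, log ((p - 1) (1 - u) / u))` almost works, and `φ n` is of the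
claimed order. The error is absorbed by a factor `exp (δ (s - α₀ r))` with `δ = η / 2` and by a
constant factor, which together cost at most `exp (η r)` for large `r`.
-/

section KilledChain

variable {ι : Type*} [Fintype ι] [DecidableEq ι] {V : ι → ℝ} {ε : ℝ}

theorem one_sub_sum_pow_le {K : Matrix ι ι ℝ} (hK : ∀ i j, 0 ≤ K i j)
    (hsum : ∀ i, ∑ j, K i j ≤ 1) (hV : ∀ i, 0 ≤ V i) (hε : 0 ≤ ε)
    (hdrift : ∀ i, 1 - ∑ j, K i j + ∑ j, K i j * V j ≤ V i + ε) (T : ℕ) (i : ι) :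
    1 - ∑ j, (K ^ T) i j ≤ V i + T * ε := by
  induction T generalizing i with
  | zero => simpa [Matrix.one_apply] using hV i
  | succ T ih =>
    have hpow : ∑ j, (K ^ (T + 1)) i j = ∑ k, K i k * ∑ j, (K ^ T) k j := by
      simp only [pow_succ', Matrix.mul_apply, mul_sum]
      exact sum_comm
    have hTε : 0 ≤ T * ε := by positivity
    calc 1 - ∑ j, (K ^ (T + 1)) i j
        = 1 - ∑ k, K i k + ∑ k, K i k * (1 - ∑ j, (K ^ T) k j) := by
          simp only [hpow, mul_sub, mul_one, sum_sub_distrib]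
          ring
      _ ≤ 1 - ∑ k, K i k + ∑ k, K i k * (V k + T * ε) := by
          gcongr with k
          · exact hK i k
          · exact ih k
      _ = 1 - ∑ k, K i k + ∑ k, K i k * V k + (∑ k, K i k) * (T * ε) := by
          simp only [mul_add, sum_add_distrib, sum_mul]
          ring
      _ ≤ V i + ε + 1 * (T * ε) := by
          exact add_le_add (hdrift i) (mul_le_mul_of_nonneg_right (hsum i) hTε)
      _ = V i + (T + 1 : ℕ) * ε := by
          push_cast
          ring

/-- The transition matrix of the chain `M` killed as soon as it is at a state that is not `alive`:
its powers have as row sums the probabilities of having stayed among the alive states. -/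
def killedMatrix (M : Matrix ι ι ℝ) (alive : ι → Prop) [DecidablePred alive] : Matrix ι ι ℝ :=
  fun i j => if alive i ∧ alive j then M i j else 0

theorem one_sub_sum_killedMatrix_pow_le {M : Matrix ι ι ℝ} (hM : M ∈ Matrix.rowStochastic ℝ ι)
    {alive : ι → Prop} [DecidablePred alive] (hV : ∀ i, 0 ≤ V i) (hε : 0 ≤ ε)
    (hdead : ∀ i, ¬ alive i → 1 ≤ V i)
    (hdrift : ∀ i, alive i → ∑ j, M i j * V j ≤ V i + ε) (T : ℕ) (i : ι) :
    1 - ∑ j, (killedMatrix M alive ^ T) i j ≤ V i + T * ε := by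
  have hM0 (i j) : 0 ≤ M i j := Matrix.nonneg_of_mem_rowStochastic hM
  have hM1 := Matrix.sum_row_of_mem_rowStochastic hM
  have hle (i j) : killedMatrix M alive i j ≤ M i j := by
    unfold killedMatrix
    split_ifs
    exacts [le_rfl, hM0 i j]
  refine one_sub_sum_pow_le (fun i j => ?_) (fun i => ?_) hV hε (fun i => ?_) T i
  · unfold killedMatrix
    split_ifs
    exacts [hM0 i j, le_rfl]
  · exact (sum_le_sum fun j _ => hle i j).trans_eq (hM1 i)
  · by_cases hi : alive i
    · refine le_trans ?_ (hdrift i hi)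
      rw [← hM1 i, ← sum_sub_distrib, ← sum_add_distrib]
      refine sum_le_sum fun j _ => ?_
      by_cases hj : alive j
      · simp [killedMatrix, hi, hj]
      · simpa [killedMatrix, hj] using le_mul_of_one_le_right (hM0 i j) (hdead j hj)
    · simpa [killedMatrix, hi] using (hdead i hi).trans (le_add_of_nonneg_right hε)

end KilledChain

section BirthDeath

/-- The transition matrix of the birth–death chain on `{0, …, r - 1}` with birth probabilities `b`
and death probabilities `d`. -/
def birthDeathMatrix (r : ℕ) (b d : ℕ → ℝ) : Matrix (Fin r) (Fin r) ℝ := fun i j =>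
  if (j : ℕ) = (i : ℕ) + 1 then b i
  else if (j : ℕ) + 1 = (i : ℕ) then d i
  else if j = i then 1 - b i - d i
  else 0

/-- `b` and `d` are the birth and death probabilities of a chain that stays in
`{0, …, r - 1}`. -/
structure IsBirthDeathRates (r : ℕ) (b d : ℕ → ℝ) : Prop where
  birth_nonneg : ∀ i < r, 0 ≤ b i
  death_nonneg : ∀ i < r, 0 ≤ d i
  birth_add_death_le_one : ∀ i < r, b i + d i ≤ 1
  death_zero : d 0 = 0
  birth_last : ∀ i, i + 1 = r → b i = 0

variable {r : ℕ} {b d : ℕ → ℝ}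

theorem sum_fin_ite_val_eq {A : Type*} [AddCommMonoid A] (r n : ℕ) (x : A) :
    ∑ k : Fin r, (if (k : ℕ) = n then x else 0) = if n < r then x else 0 := by
  rw [Fin.sum_univ_eq_sum_range (fun k => if k = n then x else 0) r]
  simp

theorem sum_birthDeathMatrix_mul (h : IsBirthDeathRates r b d) (i : Fin r) (w : ℕ → ℝ) :
    ∑ k : Fin r, birthDeathMatrix r b d i k * w k =
      w i + b i * (w (i + 1) - w i) + d i * (w (i - 1) - w i) := by
  obtain ⟨i, hi⟩ := i
  have hentry (k : Fin r) : birthDeathMatrix r b d ⟨i, hi⟩ k * w k =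
      (if (k : ℕ) = i + 1 then b i * w (i + 1) else 0)
        + (if (k : ℕ) = i then (1 - b i - d i) * w i else 0)
        + (if (k : ℕ) = i - 1 then d i * w (i - 1) else 0) := by
    have hk : k = ⟨i, hi⟩ ↔ (k : ℕ) = i := Fin.ext_iff
    unfold birthDeathMatrix
    rcases i with _ | i
    · simp only [hk, h.death_zero]
      grind
    · simp only [hk]
      grind
  have hbirth : (if i + 1 < r then b i * w (i + 1) else 0) = b i * w (i + 1) := by
    split_ifs with hir
    · rfl
    · simp [h.birth_last i (by omega)]
  simp only [hentry, sum_add_distrib, sum_fin_ite_val_eq, hbirth, if_pos hi,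
    if_pos (show i - 1 < r by omega)]
  ring

theorem birthDeathMatrix_mem_rowStochastic (h : IsBirthDeathRates r b d) :
    birthDeathMatrix r b d ∈ Matrix.rowStochastic ℝ (Fin r) := by
  refine Matrix.mem_rowStochastic_iff_sum.2 ⟨fun i j => ?_, fun i => ?_⟩
  · unfold birthDeathMatrix
    split_ifs
    · exact h.birth_nonneg i i.2
    · exact h.death_nonneg i i.2
    · linarith [h.birth_add_death_le_one i i.2]
    · exact le_rfl
  · simpa using sum_birthDeathMatrix_mul h i fun _ => 1

theorem birthDeathMatrix_tailSum_drift_le (h : IsBirthDeathRates r b d) {φ : ℕ → ℝ}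
    (hφ : ∀ l, 0 ≤ φ l) {n : ℕ} (i : Fin r)
    (hstep : (i : ℕ) < n → d i * φ i ≤ b i * φ (i + 1)) :
    ∑ j, birthDeathMatrix r b d i j * ∑ l ∈ Ico ((j : ℕ) + 1) (n + 1), φ l
      ≤ ∑ l ∈ Ico ((i : ℕ) + 1) (n + 1), φ l + φ n := by
  rw [sum_birthDeathMatrix_mul h i fun j => ∑ l ∈ Ico (j + 1) (n + 1), φ l]
  obtain ⟨i, hi⟩ := i
  have htop {j : ℕ} (hj : n ≤ j) : ∑ l ∈ Ico (j + 1) (n + 1), φ l = 0 := by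
    rw [Ico_eq_empty (by omega), sum_empty]
  have hdown (hin : i ≤ n) : d i * ∑ l ∈ Ico (i - 1 + 1) (n + 1), φ l
      = d i * (φ i + ∑ l ∈ Ico (i + 1) (n + 1), φ l) := by
    rcases i with _ | i
    · simp [h.death_zero]
    · rw [Nat.add_sub_cancel, sum_eq_sum_Ico_succ_bot (by omega)]
  rcases lt_trichotomy i n with hin | rfl | hni
  · have hup : ∑ l ∈ Ico (i + 1) (n + 1), φ l
        = φ (i + 1) + ∑ l ∈ Ico (i + 1 + 1) (n + 1), φ l :=
      sum_eq_sum_Ico_succ_bot (by omega) φ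
    dsimp only
    rw [mul_sub (d i), hdown hin.le, hup]
    linarith [hstep hin, hφ n]
  · have hd : d i ≤ 1 := by linarith [h.birth_nonneg i hi, h.birth_add_death_le_one i hi]
    dsimp only
    rw [mul_sub (d i), hdown le_rfl, htop le_rfl, htop (Nat.le_succ i)]
    linarith [mul_le_of_le_one_left (hφ i) hd]
  · dsimp only
    rw [htop hni.le, htop (hni.le.trans i.le_succ), htop (Nat.le_sub_one_of_lt hni)]
    linarith [hφ n]

theorem one_sub_sum_killed_birthDeathMatrix_pow_le (h : IsBirthDeathRates r b d) {φ : ℕ → ℝ}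
    (hφ : ∀ l, 0 ≤ φ l) {k n : ℕ} (hkn : k ≤ n) (hφk : 1 ≤ φ k)
    (hstep : ∀ s, k ≤ s → s < n → d s * φ s ≤ b s * φ (s + 1)) (T : ℕ) (i : Fin r)
    (hi : n ≤ i) :
    1 - ∑ j, (killedMatrix (birthDeathMatrix r b d) (fun j => k ≤ (j : ℕ)) ^ T) i j
      ≤ T * φ n := by
  have hV : ∑ l ∈ Ico ((i : ℕ) + 1) (n + 1), φ l = 0 := by
    rw [Ico_eq_empty (by omega), sum_empty]
  rw [← zero_add (T * φ n), ← hV]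
  refine one_sub_sum_killedMatrix_pow_le
    (V := fun j : Fin r => ∑ l ∈ Ico ((j : ℕ) + 1) (n + 1), φ l)
    (birthDeathMatrix_mem_rowStochastic h) (fun j => sum_nonneg fun l _ => hφ l) (hφ n)
    (fun j hj => ?_) (fun j hj => birthDeathMatrix_tailSum_drift_le h hφ j (hstep j hj)) T i
  exact hφk.trans (single_le_sum (fun l _ => hφ l) (mem_Ico.2 (by omega)))

end BirthDeath

section TransvectionRates

theorem bdM_eq_birthDeathMatrix (p r : ℕ) :
    bdM p r = birthDeathMatrix r (fun i => bdB p r (i + 1)) (fun i => bdD p r (i + 1)) := rfl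

theorem bdKillLow_eq_killedMatrix {p r k : ℕ} {α : ℝ} (hk : (k : ℝ) < α * r)
    (hk' : α * r ≤ k + 1) :
    bdKillLow p r α = killedMatrix (bdM p r) fun j => k ≤ (j : ℕ) := by
  have halive (j : ℕ) : α * r ≤ (j : ℝ) + 1 ↔ k ≤ j := by
    refine ⟨fun hj => ?_, fun hj => hk'.trans (by gcongr)⟩
    have : (k : ℝ) < (j + 1 : ℕ) := by push_cast; exact hk.trans_le hj
    exact Nat.lt_succ_iff.1 (Nat.cast_lt.1 this)
  ext i j
  simp only [bdKillLow, killedMatrix, halive]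

variable {p r : ℕ} {s : ℝ}

theorem bdB_nonneg (hp : 1 ≤ p) (hs : 1 ≤ s) (hsr : s ≤ r) : 0 ≤ bdB p r s := by
  have hp' : (1 : ℝ) ≤ p := Nat.one_le_cast.2 hp
  have hratio : 0 ≤ ((p : ℝ) - 1) / p := div_nonneg (by linarith) (by linarith)
  have hnum : 0 ≤ s * (r - s) := mul_nonneg (by linarith) (by linarith)
  exact div_nonneg (mul_nonneg hratio hnum) (mul_nonneg (by linarith) (by linarith))

theorem bdD_nonneg (hs : 1 ≤ s) (hsr : s ≤ r) : 0 ≤ bdD p r s := by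
  have hnum : 0 ≤ s * (s - 1) := mul_nonneg (by linarith) (by linarith)
  exact div_nonneg (mul_nonneg (by positivity) hnum) (mul_nonneg (by linarith) (by linarith))

theorem bdB_add_bdD_le_one (hp : 1 ≤ p) (hs : 1 ≤ s) (hsr : s ≤ r) :
    bdB p r s + bdD p r s ≤ 1 := by
  have hp' : (1 : ℝ) ≤ p := Nat.one_le_cast.2 hp
  have hratio : 0 ≤ ((p : ℝ) - 1) / p := div_nonneg (by linarith) (by linarith)
  have hr0 : (0 : ℝ) ≤ r - 1 := by linarith
  have hbirth : s * (r - s) ≤ r * ((r : ℝ) - 1) := by gcongr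
  have hdeath : s * (s - 1) ≤ r * ((r : ℝ) - 1) := by gcongr
  unfold bdB bdD
  rw [← add_div]
  refine div_le_one_of_le₀ ?_ (by positivity)
  calc (p - 1) / p * (s * (r - s)) + 1 / p * (s * (s - 1))
      ≤ ((p : ℝ) - 1) / p * (r * (r - 1)) + 1 / p * (r * (r - 1)) :=
        add_le_add (mul_le_mul_of_nonneg_left hbirth hratio) (by gcongr)
    _ = r * (r - 1) := by
      field_simp
      ring

theorem isBirthDeathRates_bd (hp : 1 ≤ p) :
    IsBirthDeathRates r (fun i => bdB p r (i + 1)) (fun i => bdD p r (i + 1)) := by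
  have hone (i : ℕ) : (1 : ℝ) ≤ i + 1 := le_add_of_nonneg_left i.cast_nonneg
  have hle {i : ℕ} (hi : i < r) : (i + 1 : ℝ) ≤ r := mod_cast hi
  refine ⟨fun i hi => bdB_nonneg hp (hone i) (hle hi), fun i hi => bdD_nonneg (hone i) (hle hi),
    fun i hi => bdB_add_bdD_le_one hp (hone i) (hle hi), by simp [bdD], ?_⟩
  rintro i rfl
  simp [bdB]

theorem bdD_mul_le_bdB_mul {x y : ℝ} (hs : 0 ≤ s) (hr : 1 ≤ r)
    (h : (s - 1) * x ≤ ((p : ℝ) - 1) * (r - s) * y) : bdD p r s * x ≤ bdB p r s * y := by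
  have hr0 : (0 : ℝ) ≤ r - 1 := sub_nonneg.2 (Nat.one_le_cast.2 hr)
  calc bdD p r s * x = s / (p * (r * (r - 1))) * ((s - 1) * x) := by
        simp only [bdD, div_eq_mul_inv, mul_inv]
        ring
    _ ≤ s / (p * (r * (r - 1))) * ((p - 1) * (r - s) * y) := by gcongr
    _ = bdB p r s * y := by
        simp only [bdB, div_eq_mul_inv, mul_inv]
        ring

end TransvectionRates

section LogRateRatio

open Set

theorem integral_le_of_antitoneOn {f : ℝ → ℝ} {a b : ℝ} (hab : a ≤ b)
    (hf : AntitoneOn f (Icc a b)) : ∫ u in a..b, f u ≤ f a * (b - a) := by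
  have hint := (uIcc_of_le hab ▸ hf : AntitoneOn f (uIcc a b)).intervalIntegrable
    (μ := MeasureTheory.volume)
  have := intervalIntegral.integral_mono_on hab hint intervalIntegrable_const
    fun x hx => hf (left_mem_Icc.2 hab) hx hx.1
  simpa [mul_comm] using this

theorem le_integral_of_antitoneOn {f : ℝ → ℝ} {a b : ℝ} (hab : a ≤ b)
    (hf : AntitoneOn f (Icc a b)) : f b * (b - a) ≤ ∫ u in a..b, f u := by
  have hint := (uIcc_of_le hab ▸ hf : AntitoneOn f (uIcc a b)).intervalIntegrable
    (μ := MeasureTheory.volume)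
  have := intervalIntegral.integral_mono_on hab intervalIntegrable_const hint
    fun x hx => hf hx (right_mem_Icc.2 hab) hx.2
  simpa [mul_comm] using this

/-- The logarithm of the limiting ratio of birth to death probability at density `u = s / r`; for
the chain `bdM p r` the constant is `c = p - 1`. -/
def logRateRatio (c u : ℝ) : ℝ := Real.log (c * (1 - u) / u)

variable {c : ℝ}

theorem rateRatio_pos (hc : 0 < c) {u : ℝ} (hu : u ∈ Ioo (0 : ℝ) 1) : 0 < c * (1 - u) / u :=
  div_pos (mul_pos hc (sub_pos.2 hu.2)) hu.1

theorem antitoneOn_logRateRatio (hc : 0 < c) : AntitoneOn (logRateRatio c) (Ioo 0 1) := by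
  intro u hu v hv huv
  have hu0 := hu.1
  have hu1 : 0 ≤ 1 - u := sub_nonneg.2 hu.2.le
  refine Real.log_le_log (rateRatio_pos hc hv) ?_
  gcongr

theorem intervalIntegrable_logRateRatio (hc : 0 < c) {a b : ℝ} (ha : a ∈ Ioo (0 : ℝ) 1)
    (hb : b ∈ Ioo (0 : ℝ) 1) :
    IntervalIntegrable (logRateRatio c) MeasureTheory.volume a b :=
  ((antitoneOn_logRateRatio hc).mono (ordConnected_Ioo.uIcc_subset ha hb)).intervalIntegrable

theorem exp_logRateRatio_div (hc : 0 < c) {s r : ℝ} (hs : 0 < s) (hsr : s < r) :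
    Real.exp (logRateRatio c (s / r)) = c * (r - s) / s := by
  have hr := hs.trans hsr
  rw [logRateRatio, Real.exp_log (rateRatio_pos hc ⟨div_pos hs hr, (div_lt_one hr).2 hsr⟩)]
  field_simp

end LogRateRatio

section HittingWeight

open Set

/-- The weights `φ s` whose tail sums bound the probability of descending below `α r`: up to the
perturbation `δ` of the exponent and a constant factor, the products over `[α r, s]` of the ratios
of death to birth probability. The constant makes the weight at least `1` just below `α r`. -/
def hittingWeight (c α δ : ℝ) (r s : ℕ) : ℝ :=
  Real.exp (δ + |logRateRatio c α| + δ * (s - α * r)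
    - r * ∫ u in α..(s / r : ℝ), logRateRatio c u)

theorem hittingWeight_nonneg (c α δ : ℝ) (r s : ℕ) : 0 ≤ hittingWeight c α δ r s :=
  (Real.exp_pos _).le

variable {c α δ : ℝ} {r : ℕ}

theorem one_le_hittingWeight (hc : 0 < c) (hα : α ∈ Ioo (0 : ℝ) 1) (hδ : 0 ≤ δ) {k : ℕ}
    (hk0 : 0 < k) (hk : (k : ℝ) < α * r) (hk' : α * r ≤ k + 1) :
    1 ≤ hittingWeight c α δ r k := by
  have hr : (0 : ℝ) < r := pos_of_mul_pos_right (k.cast_nonneg.trans_lt hk) hα.1.le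
  have hyα : (k / r : ℝ) ≤ α := (div_le_iff₀ hr).2 hk.le
  have hy : (k / r : ℝ) ∈ Ioo (0 : ℝ) 1 := ⟨by positivity, hyα.trans_lt hα.2⟩
  have hint : logRateRatio c α * (α - k / r) ≤ ∫ u in (k / r : ℝ)..α, logRateRatio c u :=
    le_integral_of_antitoneOn hyα
      ((antitoneOn_logRateRatio hc).mono (ordConnected_Ioo.out hy hα))
  have hlower : -|logRateRatio c α| ≤ r * ∫ u in (k / r : ℝ)..α, logRateRatio c u :=
    calc -|logRateRatio c α| ≤ logRateRatio c α * (α * r - k) := by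
          cases abs_cases (logRateRatio c α) <;> nlinarith
      _ = r * (logRateRatio c α * (α - k / r)) := by field_simp
      _ ≤ _ := by gcongr
  have hδk : δ * (α * r - k) ≤ δ := mul_le_of_le_one_right hδ (by linarith)
  refine Real.one_le_exp ?_
  rw [intervalIntegral.integral_symm]
  linarith

theorem hittingWeight_le_mul_exp (hc : 0 < c) (hα : α ∈ Ioo (0 : ℝ) 1) {s : ℕ} (hs : 0 < s)
    (hsr : s + 1 < r) :
    hittingWeight c α δ r s
      ≤ hittingWeight c α δ r (s + 1) * Real.exp (logRateRatio c (s / r) - δ) := by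
  have hr : (0 : ℝ) < r := Nat.cast_pos.2 (by omega)
  have hyz : (s / r : ℝ) ≤ (s + 1) / r := by gcongr; linarith
  have hz : ((s + 1) / r : ℝ) ∈ Ioo (0 : ℝ) 1 :=
    ⟨by positivity, (div_lt_one hr).2 (mod_cast hsr)⟩
  have hy : (s / r : ℝ) ∈ Ioo (0 : ℝ) 1 := ⟨by positivity, hyz.trans_lt hz.2⟩
  have hsplit := intervalIntegral.integral_add_adjacent_intervals
    (intervalIntegrable_logRateRatio hc hα hy) (intervalIntegrable_logRateRatio hc hy hz)
  have hupper : r * ∫ u in (s / r : ℝ)..(s + 1) / r, logRateRatio c u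
      ≤ logRateRatio c (s / r) :=
    calc _ ≤ r * (logRateRatio c (s / r) * ((s + 1) / r - s / r)) := by
          gcongr
          exact integral_le_of_antitoneOn hyz
            ((antitoneOn_logRateRatio hc).mono (ordConnected_Ioo.out hy hz))
      _ = logRateRatio c (s / r) := by
          field_simp
          ring
  unfold hittingWeight
  rw [← Real.exp_add, Real.exp_le_exp]
  push_cast
  rw [← hsplit]
  linarith

theorem mul_hittingWeight_le (hc : 0 < c) (hα : α ∈ Ioo (0 : ℝ) 1) {s : ℕ} (hs : 0 < s)
    (hsr : s + 1 < r) (hδ : 1 ≤ δ * (r - (s + 1))) :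
    s * hittingWeight c α δ r s ≤ c * (r - (s + 1)) * hittingWeight c α δ r (s + 1) := by
  have hs0 : (0 : ℝ) < s := Nat.cast_pos.2 hs
  have hgap : (0 : ℝ) < r - (s + 1) := sub_pos.2 (mod_cast hsr)
  have hexp : (r : ℝ) - s ≤ (r - (s + 1)) * Real.exp δ := by
    nlinarith [Real.add_one_le_exp δ]
  have hratio : s * Real.exp (logRateRatio c (s / r) - δ) ≤ c * (r - (s + 1)) := by
    rw [Real.exp_sub, exp_logRateRatio_div hc hs0 (by linarith), mul_div_assoc',
      mul_div_cancel₀ _ hs0.ne', div_le_iff₀ (Real.exp_pos δ), mul_assoc]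
    gcongr
  have hw := hittingWeight_nonneg c α δ r (s + 1)
  calc s * hittingWeight c α δ r s
      ≤ s * (hittingWeight c α δ r (s + 1) * Real.exp (logRateRatio c (s / r) - δ)) := by
        gcongr
        exact hittingWeight_le_mul_exp hc hα hs hsr
    _ = s * Real.exp (logRateRatio c (s / r) - δ) * hittingWeight c α δ r (s + 1) := by ring
    _ ≤ c * (r - (s + 1)) * hittingWeight c α δ r (s + 1) := by gcongr

theorem hittingWeight_le_exp (hc : 0 < c) {β : ℝ} (hα : 0 < α) (hβ : β < 1) (hδ : 0 ≤ δ) {n : ℕ}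
    (hαn : α * r ≤ n) (hn : (n : ℝ) < β * r) (hn' : β * r ≤ n + 1)
    (hr : δ + 2 * |logRateRatio c α| ≤ δ * r) :
    hittingWeight c α δ r n
      ≤ Real.exp (-(((∫ u in α..β, logRateRatio c u) - 2 * δ) * r)) := by
  have hβα : 0 < (β - α) * r := by linarith
  have hr0 : (0 : ℝ) < r := r.cast_nonneg.lt_of_ne (right_ne_zero_of_mul hβα.ne').symm
  have hαy : α ≤ n / r := (le_div_iff₀ hr0).2 hαn
  have hyβ : (n / r : ℝ) ≤ β := (div_le_iff₀ hr0).2 hn.le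
  have hα' : α ∈ Ioo (0 : ℝ) 1 := ⟨hα, by linarith⟩
  have hβ' : β ∈ Ioo (0 : ℝ) 1 := ⟨by linarith, hβ⟩
  have hy : (n / r : ℝ) ∈ Ioo (0 : ℝ) 1 := ⟨by linarith, by linarith⟩
  have hsplit := intervalIntegral.integral_add_adjacent_intervals
    (intervalIntegrable_logRateRatio hc hα' hy) (intervalIntegrable_logRateRatio hc hy hβ')
  have hupper : (∫ u in (n / r : ℝ)..β, logRateRatio c u) * r ≤ |logRateRatio c α| :=
    calc _ ≤ logRateRatio c (n / r) * (β - n / r) * r := by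
          gcongr
          exact integral_le_of_antitoneOn hyβ
            ((antitoneOn_logRateRatio hc).mono (ordConnected_Ioo.out hy hβ'))
      _ ≤ |logRateRatio c α| * (β - n / r) * r := by
          have := sub_nonneg.2 hyβ
          gcongr
          exact (antitoneOn_logRateRatio hc hα' hy hαy).trans (le_abs_self _)
      _ = |logRateRatio c α| * (β * r - n) := by field_simp
      _ ≤ |logRateRatio c α| := mul_le_of_le_one_right (abs_nonneg _) (by linarith)
  have hδn : δ * (n - α * r) ≤ δ * r := by
    gcongr
    nlinarith
  unfold hittingWeight
  rw [Real.exp_le_exp, ← hsplit]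
  linarith

end HittingWeight

theorem exists_nat_lt_le_add_one {x : ℝ} (hx : 0 < x) : ∃ n : ℕ, (n : ℝ) < x ∧ x ≤ n + 1 := by
  obtain ⟨n, hn⟩ := Nat.exists_eq_succ_of_ne_zero (Nat.ceil_pos.2 hx).ne'
  exact ⟨n, by simpa using (Nat.ceil_eq_iff n.succ_ne_zero).1 hn⟩

theorem one_sub_sum_bdKillLow_pow_le {p r T : ℕ} {α₀ α₁ δ : ℝ} (hp : 2 ≤ p) (h0 : 0 < α₀)
    (h01 : α₀ < α₁) (h1 : α₁ < 1) (hδ : 0 < δ) (hr0 : 1 < α₀ * r) (hr01 : 1 < (α₁ - α₀) * r)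
    (hr1 : 1 < δ * (1 - α₁) * r) (hr : δ + 2 * |logRateRatio (p - 1) α₀| < δ * r)
    (i : Fin r) (hi : α₁ * r ≤ (i : ℕ) + 1) :
    1 - ∑ j, (bdKillLow p r α₀ ^ T) i j ≤
      T * Real.exp (-(((∫ u in α₀..α₁, logRateRatio (p - 1) u) - 2 * δ) * r)) := by
  have hc : (0 : ℝ) < p - 1 := sub_pos.2 (Nat.one_lt_cast.2 hp)
  have hα₀ : α₀ ∈ Set.Ioo (0 : ℝ) 1 := ⟨h0, h01.trans h1⟩
  obtain ⟨k, hk, hk'⟩ := exists_nat_lt_le_add_one (zero_lt_one.trans hr0)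
  obtain ⟨n, hn, hn'⟩ : ∃ n : ℕ, (n : ℝ) < α₁ * r ∧ α₁ * r ≤ n + 1 :=
    exists_nat_lt_le_add_one (by linarith)
  have hk0 : 0 < k := Nat.cast_pos.1 (by linarith : (0 : ℝ) < k)
  have hkn : k ≤ n := Nat.cast_le.1 (by linarith : (k : ℝ) ≤ n)
  have hni : n ≤ i := by
    have : (n : ℝ) < (i + 1 : ℕ) := by push_cast; exact hn.trans_le hi
    exact Nat.lt_succ_iff.1 (Nat.cast_lt.1 this)
  have hstep (s : ℕ) (hks : k ≤ s) (hsn : s < n) :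
      bdD p r (s + 1) * hittingWeight (p - 1) α₀ δ r s
        ≤ bdB p r (s + 1) * hittingWeight (p - 1) α₀ δ r (s + 1) := by
    have hsn' : (s : ℝ) + 1 ≤ n := mod_cast hsn
    refine bdD_mul_le_bdB_mul (by positivity) i.pos ?_
    rw [add_sub_cancel_right]
    exact mul_hittingWeight_le hc hα₀ (hk0.trans_le hks) (by omega) (by nlinarith)
  rw [bdKillLow_eq_killedMatrix hk hk', bdM_eq_birthDeathMatrix]
  calc _ ≤ T * hittingWeight (p - 1) α₀ δ r n :=
        one_sub_sum_killed_birthDeathMatrix_pow_le (isBirthDeathRates_bd (one_le_two.trans hp))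
          (hittingWeight_nonneg _ α₀ δ r) hkn (one_le_hittingWeight hc hα₀ hδ.le hk0 hk hk')
          hstep T i hni
    _ ≤ _ := by
        gcongr
        exact hittingWeight_le_exp hc h0 h1 hδ.le (by linarith) hn hn' hr.le

theorem stmt14_general {p : ℕ} (hp : 2 ≤ p) {α₀ α₁ : ℝ} (h0 : 0 < α₀) (h01 : α₀ < α₁)
    (h1 : α₁ < 1) {η : ℝ} (hη : 0 < η) :
    ∃ r₀ : ℕ, ∀ r : ℕ, r₀ ≤ r → ∀ T : ℕ, ∀ i : Fin r, α₁ * r ≤ ((i : ℕ) + 1 : ℝ) →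
      1 - ∑ j, (bdKillLow p r α₀ ^ T) i j ≤
        T * Real.exp
          (-(((∫ u in α₀..α₁, Real.log (((p : ℝ) - 1) * (1 - u) / u)) - η) * r)) := by
  have hlarge {a : ℝ} (ha : 0 < a) (x : ℝ) : ∀ᶠ r : ℕ in Filter.atTop, x < a * r :=
    (tendsto_natCast_atTop_atTop.const_mul_atTop ha).eventually_gt_atTop x
  have hδ : 0 < η / 2 := half_pos hη
  refine Filter.eventually_atTop.1 ?_
  filter_upwards [hlarge h0 1, hlarge (sub_pos.2 h01) 1,
    hlarge (mul_pos hδ (sub_pos.2 h1)) 1,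
    hlarge hδ (η / 2 + 2 * |logRateRatio (p - 1) α₀|)] with r hr0 hr01 hr1 hr T i hi
  simpa only [logRateRatio, mul_div_cancel₀ η two_ne_zero] using
    one_sub_sum_bdKillLow_pow_le (T := T) hp h0 h01 h1 hδ hr0 hr01 hr1 hr i hi

theorem stmt14 :
    ∀ p : ℕ, Nat.Prime p → p ≠ 2 →
    ∀ α₀ α₁ : ℝ, 0 < α₀ → α₀ < α₁ → α₁ < ((p : ℝ) - 1) / p →
      ∀ η : ℝ, 0 < η → ∃ r₀ : ℕ, ∀ r : ℕ, r₀ ≤ r →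
        ∀ T : ℕ, (T : ℝ) ≤ (r : ℝ) ^ 3 →
          ∀ i : Fin r, α₁ * r ≤ ((i : ℕ) + 1 : ℝ) →
            -- P_s(inf_{0≤t≤T} S_t < α₀ r) = 1 − (survival probability of the killed chain)
            1 - (∑ j, ((bdKillLow p r α₀) ^ T) i j) ≤
              (T : ℝ) * Real.exp
                (-(((∫ u in α₀..α₁, Real.log (((p : ℝ) - 1) * (1 - u) / u)) - η) * r)) := by
  intro p hp _ α₀ α₁ h0 h01 h1 η hη
  have hα₁ : α₁ < 1 :=
    h1.trans_le (div_le_one_of_le₀ (sub_le_self _ zero_le_one) p.cast_nonneg)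
  obtain ⟨r₀, hr₀⟩ := stmt14_general hp.two_le h0 h01 hα₁ hη
  exact ⟨r₀, fun r hr T _ => hr₀ r hr T⟩
end
end
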